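/- arXiv:2011.02393 — 3 statements merged into one kernel-verified Lean document; each statement's English description precedes it below -/
import Mathlib

section
/- For every integer w ≥ 4, with u = w−2, the sum formula for triple T-values holds: ∑_{a+b+c=w, a≥2, b,c≥1} T(a,b,c) = (2/3)·T(2)·T(u) − 2·T(u,2) + 4·( ζ(u,1̄,1) − ζ(ū,1,1) + ζ(ū,1,1̄) − ζ(u,1̄,1̄) ). -/
open Filter

/-- Depth-1 Euler sum `ζ(s; e) = ∑_{n ≥ 1} eⁿ / nˢ`,
defined as the limit of partial sums. `e = 1` gives `ζ(s)`, `e = -1` gives `ζ(s̄)`. -/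
noncomputable def eulerSum1 (s : ℕ) (e : ℝ) : ℝ :=
  limUnder atTop (fun N : ℕ =>
    ∑ n ∈ Finset.Icc 1 N, e ^ n / (n : ℝ) ^ s)

/-- Depth-2 Euler sum `ζ(s₁, s₂; e₁, e₂) = ∑_{n₁ > n₂ ≥ 1} e₁^{n₁} e₂^{n₂} / (n₁^{s₁} n₂^{s₂})`,
defined as the limit of iterated partial sums. A bar over an argument means the
corresponding sign is `-1`. -/
noncomputable def eulerSum2 (s₁ s₂ : ℕ) (e₁ e₂ : ℝ) : ℝ :=
  limUnder atTop (fun N : ℕ =>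
    ∑ n₁ ∈ Finset.Icc 1 N, ∑ n₂ ∈ Finset.Ico 1 n₁,
      e₁ ^ n₁ * e₂ ^ n₂ / ((n₁ : ℝ) ^ s₁ * (n₂ : ℝ) ^ s₂))

/-- Depth-3 Euler sum
`ζ(s₁, s₂, s₃; e₁, e₂, e₃) = ∑_{n₁ > n₂ > n₃ ≥ 1} e₁^{n₁} e₂^{n₂} e₃^{n₃} / (n₁^{s₁} n₂^{s₂} n₃^{s₃})`. -/
noncomputable def eulerSum3 (s₁ s₂ s₃ : ℕ) (e₁ e₂ e₃ : ℝ) : ℝ :=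
  limUnder atTop (fun N : ℕ =>
    ∑ n₁ ∈ Finset.Icc 1 N, ∑ n₂ ∈ Finset.Ico 1 n₁, ∑ n₃ ∈ Finset.Ico 1 n₂,
      e₁ ^ n₁ * e₂ ^ n₂ * e₃ ^ n₃ / ((n₁ : ℝ) ^ s₁ * (n₂ : ℝ) ^ s₂ * (n₃ : ℝ) ^ s₃))

/-- Depth-1 multiple T-value `T(s) = 2 ∑_{m odd, m ≥ 1} 1 / mˢ`. -/
noncomputable def tValue1 (s : ℕ) : ℝ :=
  limUnder atTop (fun N : ℕ =>
    ∑ m ∈ Finset.Icc 1 N, if m % 2 = 1 then 2 / (m : ℝ) ^ s else 0)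

/-- Depth-2 multiple T-value
`T(s₁, s₂) = ∑_{m₁ > m₂ > 0, m₁ even, m₂ odd} 4 / (m₁^{s₁} m₂^{s₂})`. -/
noncomputable def tValue2 (s₁ s₂ : ℕ) : ℝ :=
  limUnder atTop (fun N : ℕ =>
    ∑ m₁ ∈ Finset.Icc 1 N, ∑ m₂ ∈ Finset.Ico 1 m₁,
      if m₁ % 2 = 0 ∧ m₂ % 2 = 1 then 4 / ((m₁ : ℝ) ^ s₁ * (m₂ : ℝ) ^ s₂) else 0)

/-- Depth-3 multiple T-value
`T(s₁, s₂, s₃) = ∑_{m₁ > m₂ > m₃ > 0, m₁ odd, m₂ even, m₃ odd} 8 / (m₁^{s₁} m₂^{s₂} m₃^{s₃})`. -/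
noncomputable def tValue3 (s₁ s₂ s₃ : ℕ) : ℝ :=
  limUnder atTop (fun N : ℕ =>
    ∑ m₁ ∈ Finset.Icc 1 N, ∑ m₂ ∈ Finset.Ico 1 m₁, ∑ m₃ ∈ Finset.Ico 1 m₂,
      if m₁ % 2 = 1 ∧ m₂ % 2 = 0 ∧ m₃ % 2 = 1 then
        8 / ((m₁ : ℝ) ^ s₁ * (m₂ : ℝ) ^ s₂ * (m₃ : ℝ) ^ s₃) else 0)

open Topology Finset

section SumManipulation

theorem sum_range_two_mul (f : ℕ → ℝ) (L : ℕ) :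
    ∑ m ∈ range (2 * L), f m = ∑ i ∈ range L, (f (2 * i) + f (2 * i + 1)) := by
  induction L with
  | zero => simp
  | succ L ih =>
    rw [show 2 * (L + 1) = 2 * L + 1 + 1 by ring, sum_range_succ, sum_range_succ, ih,
      sum_range_succ]
    ring

theorem sum_Ico_one_eq_sum_range (f : ℕ → ℝ) (hf : f 0 = 0) (n : ℕ) :
    ∑ m ∈ Ico 1 n, f m = ∑ m ∈ range n, f m := by
  cases n with
  | zero => simp
  | succ n => rw [sum_range_succ', hf, add_zero, sum_Ico_eq_sum_range]; simp [add_comm]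

theorem sum_Ico_ite_odd (f : ℕ → ℝ) (n : ℕ) :
    ∑ m ∈ Ico 1 n, (if m % 2 = 1 then f m else 0) = ∑ k ∈ range (n / 2), f (2 * k + 1) := by
  rw [sum_Ico_one_eq_sum_range _ (by simp)]
  obtain ⟨j, rfl | rfl⟩ := n.even_or_odd'
  · simp [sum_range_two_mul, Nat.add_mod]
  · rw [sum_range_succ, sum_range_two_mul]
    simp [Nat.add_mod, Nat.add_div]

theorem sum_Ico_ite_even (f : ℕ → ℝ) (hf : f 0 = 0) (i : ℕ) :
    ∑ m ∈ Ico 1 (2 * i + 1), (if m % 2 = 0 then f m else 0)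
      = ∑ j ∈ range (i + 1), f (2 * j) := by
  rw [sum_Ico_one_eq_sum_range _ (by simp [hf]), sum_range_succ, sum_range_two_mul,
    sum_range_succ]
  simp [Nat.add_mod]

/-- Summation over a triangle along its columns. -/
theorem sum_triangle (f : ℕ → ℕ → ℝ) (n : ℕ) :
    ∑ i ∈ range n, ∑ j ∈ range (i + 1), f i j
      = ∑ j ∈ range n, ∑ p ∈ range (n - j), f (j + p) j := by
  rw [sum_sigma', sum_sigma']
  refine sum_nbij' (fun x => ⟨x.2, x.1 - x.2⟩) (fun x => ⟨x.1 + x.2, x.1⟩) ?_ ?_ ?_ ?_ ?_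
  · rintro ⟨i, j⟩ h; simp at h ⊢; omega
  · rintro ⟨i, j⟩ h; simp at h ⊢; omega
  · rintro ⟨i, j⟩ h; simp at h ⊢; omega
  · rintro ⟨i, j⟩ h; simp at h ⊢
  · rintro ⟨i, j⟩ h; simp at h ⊢; rw [Nat.add_sub_cancel' (by omega)]

/-- Summation over a strict triangle along its columns. -/
theorem sum_strict_triangle (f : ℕ → ℕ → ℝ) (n : ℕ) :
    ∑ j ∈ range (n + 1), ∑ k ∈ range j, f j k
      = ∑ k ∈ range n, ∑ q ∈ range (n - k), f (k + q + 1) k := by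
  rw [sum_range_succ']
  simpa using sum_triangle (fun j k => f (j + 1) k) n

end SumManipulation

section Convergence

theorem harmonic_cast_nonneg (n : ℕ) : (0 : ℝ) ≤ harmonic n := by
  exact_mod_cast (Finset.sum_nonneg fun i _ => by positivity : 0 ≤ harmonic n)

theorem summable_harmonic_sq_div_sq :
    Summable fun n : ℕ => (1 + (harmonic n : ℝ)) ^ 2 / ((n : ℝ) + 1) ^ 2 := by
  have hs : Summable fun n : ℕ => 36 * (1 / ((n + 1 : ℕ) : ℝ) ^ (3 / 2 : ℝ)) :=
    ((summable_nat_add_iff 1).2 (Real.summable_one_div_nat_rpow.2 (by norm_num))).mul_left 36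
  refine Summable.of_nonneg_of_le (fun n => by positivity) (fun n => ?_) hs
  have hx : (1 : ℝ) ≤ (n : ℝ) + 1 := by simp
  set x : ℝ := (n : ℝ) + 1
  have hx0 : 0 < x := by linarith
  have h1 : (harmonic n : ℝ) ≤ 1 + Real.log x := by
    refine (harmonic_le_one_add_log n).trans ?_
    rcases Nat.eq_zero_or_pos n with rfl | hn
    · simpa using Real.log_nonneg hx
    · have : (0 : ℝ) < n := by exact_mod_cast hn
      gcongr
      simp [x]
  have h2 : Real.log x ≤ x ^ (1 / 4 : ℝ) / (1 / 4) := Real.log_le_rpow_div hx0.le (by norm_num)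
  have h3 : 1 ≤ x ^ (1 / 4 : ℝ) := Real.one_le_rpow hx (by norm_num)
  have h0 := harmonic_cast_nonneg n
  have h4 : (1 + (harmonic n : ℝ)) ^ 2 ≤ (6 * x ^ (1 / 4 : ℝ)) ^ 2 :=
    pow_le_pow_left₀ (by linarith) (by linarith) 2
  have h5 : (x ^ (1 / 4 : ℝ)) ^ 2 * x ^ (3 / 2 : ℝ) = x ^ 2 := by
    rw [← Real.rpow_natCast, ← Real.rpow_mul hx0.le, ← Real.rpow_add hx0, ← Real.rpow_natCast]
    norm_num
  have h6 : 0 < x ^ (3 / 2 : ℝ) := by positivity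
  push_cast
  change _ ≤ 36 * (1 / x ^ (3 / 2 : ℝ))
  rw [mul_one_div, div_le_div_iff₀ (by positivity) h6, ← h5]
  calc _ ≤ (6 * x ^ (1 / 4 : ℝ)) ^ 2 * x ^ (3 / 2 : ℝ) := by gcongr
    _ = _ := by ring

/-- Along even indices, the partial sums of a summable series tend to its `limUnder` value. -/
theorem tendsto_sum_range_two_mul (f : ℕ → ℝ) (hf : Summable f) (h0 : f 0 = 0) :
    Tendsto (fun L : ℕ => ∑ n ∈ range (2 * L), f n) atTop
      (𝓝 (limUnder atTop fun N : ℕ => ∑ n ∈ Icc 1 N, f n)) := by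
  have h1 : Tendsto (fun N : ℕ => ∑ n ∈ Icc 1 N, f n) atTop (𝓝 (∑' n, f n)) := by
    have := (tendsto_add_atTop_iff_nat 1).2 hf.hasSum.tendsto_sum_nat
    refine this.congr fun N => ?_
    rw [← sum_Ico_one_eq_sum_range f h0]
    rfl
  rw [h1.limUnder_eq]
  exact hf.hasSum.tendsto_sum_nat.comp (tendsto_id.const_mul_atTop' two_pos)

/-- Dominated convergence for finite sums of growing length. -/
theorem tendsto_sum_range_of_dominated (f : ℕ → ℕ → ℝ) (g bound : ℕ → ℝ) (hb : Summable bound)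
    (hf : ∀ j, Tendsto (fun L => f L j) atTop (𝓝 (g j)))
    (hle : ∀ L j, j < L → |f L j| ≤ bound j) (h0 : ∀ j, 0 ≤ bound j) :
    Tendsto (fun L => ∑ j ∈ range L, f L j) atTop (𝓝 (∑' j, g j)) := by
  have key : Tendsto (fun L => ∑' j, if j < L then f L j else 0) atTop (𝓝 (∑' j, g j)) := by
    refine tendsto_tsum_of_dominated_convergence hb (fun j => ?_) (.of_forall fun L j => ?_)
    · refine (hf j).congr' ?_
      filter_upwards [eventually_gt_atTop j] with L hL
      simp [hL]
    · split_ifs with h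
      · exact hle L j h
      · simpa using h0 j
  refine key.congr fun L => ?_
  rw [tsum_eq_sum (s := range L) (fun j hj => by simp at hj; simp [hj])]
  exact sum_congr rfl fun j hj => by simp [mem_range.1 hj]

theorem sum_Ico_one_div_le_harmonic (n : ℕ) :
    ∑ k ∈ Ico 1 n, 1 / (k : ℝ) ≤ harmonic n := by
  rw [sum_Ico_one_eq_sum_range _ (by simp)]
  cases n with
  | zero => simp
  | succ n =>
    rw [sum_range_succ', harmonic_succ]
    simp [harmonic]
    positivity

theorem summable_of_le_harmonic_sq (f : ℕ → ℝ) (C : ℝ) (h0 : f 0 = 0)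
    (hf : ∀ l : ℕ, 0 < l → |f l| ≤ C / (l : ℝ) ^ 2 * (1 + harmonic l) ^ 2) : Summable f := by
  have hC : 0 ≤ C := by
    have := (abs_nonneg _).trans (hf 1 one_pos)
    norm_num at this
    exact this
  refine Summable.of_norm_bounded (summable_harmonic_sq_div_sq.mul_left (4 * C)) fun l => ?_
  rcases Nat.eq_zero_or_pos l with rfl | hl
  · simp [h0, hC]
  have hl' : (1 : ℝ) ≤ l := by exact_mod_cast hl
  calc ‖f l‖ ≤ C / (l : ℝ) ^ 2 * (1 + harmonic l) ^ 2 := hf l hl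
    _ ≤ 4 * C / ((l : ℝ) + 1) ^ 2 * (1 + harmonic l) ^ 2 := by
        refine mul_le_mul_of_nonneg_right ?_ (sq_nonneg _)
        rw [div_le_div_iff₀ (by positivity) (by positivity)]
        have : ((l : ℝ) + 1) ^ 2 ≤ 4 * l ^ 2 := by nlinarith
        nlinarith
    _ = _ := by ring

/-- A double sum whose terms are `O(1 / (n₁² n₂))` is summable in `n₁`. -/
theorem summable_double (f : ℕ → ℕ → ℝ) (C : ℝ)
    (hf : ∀ l m : ℕ, 0 < l → 0 < m → |f l m| ≤ C / ((l : ℝ) ^ 2 * m)) :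
    Summable fun l => ∑ m ∈ Ico 1 l, f l m := by
  have hC : 0 ≤ C := by simpa using (abs_nonneg _).trans (hf 1 1 one_pos one_pos)
  refine summable_of_le_harmonic_sq _ C (by simp) fun l hl => ?_
  calc |∑ m ∈ Ico 1 l, f l m| ≤ ∑ m ∈ Ico 1 l, C / (l : ℝ) ^ 2 * (1 / (m : ℝ)) := by
        refine (abs_sum_le_sum_abs _ _).trans (sum_le_sum fun m hm => ?_)
        refine (hf l m hl (mem_Ico.1 hm).1).trans_eq ?_
        rw [div_mul_div_comm, mul_one]
    _ = C / (l : ℝ) ^ 2 * ∑ m ∈ Ico 1 l, 1 / (m : ℝ) := by rw [mul_sum]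
    _ ≤ C / (l : ℝ) ^ 2 * (1 + harmonic l) ^ 2 := by
        gcongr
        nlinarith [sum_Ico_one_div_le_harmonic l, harmonic_cast_nonneg l]

/-- A triple sum whose terms are `O(1 / (n₁² n₂ n₃))` is summable in `n₁`. -/
theorem summable_triple (f : ℕ → ℕ → ℕ → ℝ) (C : ℝ)
    (hf : ∀ l m n : ℕ, 0 < l → 0 < m → 0 < n → |f l m n| ≤ C / ((l : ℝ) ^ 2 * m * n)) :
    Summable fun l => ∑ m ∈ Ico 1 l, ∑ n ∈ Ico 1 m, f l m n := by
  have hC : 0 ≤ C := by simpa using (abs_nonneg _).trans (hf 1 1 1 one_pos one_pos one_pos)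
  refine summable_of_le_harmonic_sq _ C (by simp) fun l hl => ?_
  calc |∑ m ∈ Ico 1 l, ∑ n ∈ Ico 1 m, f l m n|
      ≤ ∑ m ∈ Ico 1 l, ∑ n ∈ Ico 1 l, C / (l : ℝ) ^ 2 * (1 / (m : ℝ) * (1 / n)) := by
        refine (abs_sum_le_sum_abs _ _).trans
          (sum_le_sum fun m hm => (abs_sum_le_sum_abs _ _).trans ?_)
        rw [mem_Ico] at hm
        calc ∑ n ∈ Ico 1 m, |f l m n|
            ≤ ∑ n ∈ Ico 1 m, C / (l : ℝ) ^ 2 * (1 / (m : ℝ) * (1 / n)) := by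
              refine sum_le_sum fun n hn => ?_
              rw [mem_Ico] at hn
              refine (hf l m n hl (by omega) (by omega)).trans_eq ?_
              simp only [div_eq_mul_inv, mul_inv]
              ring
          _ ≤ _ := sum_le_sum_of_subset_of_nonneg (Ico_subset_Ico_right hm.2.le)
              fun n _ _ => by positivity
    _ = C / (l : ℝ) ^ 2 * (∑ m ∈ Ico 1 l, 1 / (m : ℝ)) ^ 2 := by
        rw [sq (∑ m ∈ Ico 1 l, 1 / (m : ℝ)), sum_mul_sum]
        simp only [mul_sum]
    _ ≤ C / (l : ℝ) ^ 2 * (1 + harmonic l) ^ 2 := by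
        gcongr
        linarith [sum_Ico_one_div_le_harmonic l]

end Convergence

section OddHarmonic

/-- The odd harmonic number `∑_{i < n} 1 / (2 i + 1)`. -/
noncomputable def oddHarmonic (n : ℕ) : ℝ := ∑ i ∈ range n, 1 / (2 * (i : ℝ) + 1)

/-- The sum `∑_{i < n} 1 / (2 i + 1) ^ 2`. -/
noncomputable def oddHarmonicSq (n : ℕ) : ℝ := ∑ i ∈ range n, 1 / (2 * (i : ℝ) + 1) ^ 2

/-- The double sum of `1 / (p q)` over even `p` and odd `q` with `0 < q < p ≤ 2 n`. -/
noncomputable def evenOddHarmonic (n : ℕ) : ℝ :=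
  ∑ j ∈ range (n + 1), oddHarmonic j / (2 * (j : ℝ))

@[simp]
theorem oddHarmonic_zero : oddHarmonic 0 = 0 := by simp [oddHarmonic]

theorem oddHarmonic_succ (n : ℕ) :
    oddHarmonic (n + 1) = oddHarmonic n + 1 / (2 * (n : ℝ) + 1) := by
  simp [oddHarmonic, sum_range_succ]

theorem oddHarmonic_nonneg (n : ℕ) : 0 ≤ oddHarmonic n :=
  sum_nonneg fun i _ => by positivity

theorem oddHarmonic_mono : Monotone oddHarmonic :=
  monotone_nat_of_le_succ fun n => by
    rw [oddHarmonic_succ]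
    have : 0 ≤ 1 / (2 * (n : ℝ) + 1) := by positivity
    linarith

theorem oddHarmonic_le_harmonic (n : ℕ) : oddHarmonic n ≤ harmonic n := by
  simp only [oddHarmonic, harmonic, Rat.cast_sum]
  refine sum_le_sum fun i _ => ?_
  push_cast
  rw [one_div]
  gcongr
  linarith [(Nat.cast_nonneg i : (0 : ℝ) ≤ i)]

theorem evenOddHarmonic_nonneg (n : ℕ) : 0 ≤ evenOddHarmonic n :=
  sum_nonneg fun i _ => div_nonneg (oddHarmonic_nonneg i) (by positivity)

theorem evenOddHarmonic_le (n : ℕ) : evenOddHarmonic n ≤ (harmonic n : ℝ) ^ 2 := by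
  rw [evenOddHarmonic, sum_range_succ']
  simp only [oddHarmonic_zero, zero_div, add_zero]
  have h0 := harmonic_cast_nonneg n
  calc ∑ k ∈ range n, oddHarmonic (k + 1) / (2 * ((k + 1 : ℕ) : ℝ))
      ≤ ∑ k ∈ range n, (harmonic n : ℝ) * ((k + 1 : ℕ) : ℝ)⁻¹ := by
        refine sum_le_sum fun k hk => ?_
        rw [div_eq_mul_inv]
        have hk' : oddHarmonic (k + 1) ≤ harmonic n :=
          (oddHarmonic_mono (by simpa [Nat.succ_le_iff] using hk)).trans
            (oddHarmonic_le_harmonic n)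
        have hinv : (2 * ((k + 1 : ℕ) : ℝ))⁻¹ ≤ ((k + 1 : ℕ) : ℝ)⁻¹ := by
          gcongr
          linarith [(Nat.cast_nonneg (k + 1) : (0 : ℝ) ≤ ((k + 1 : ℕ) : ℝ))]
        exact mul_le_mul hk' hinv (by positivity) h0
    _ = _ := by rw [← mul_sum, sq]; simp [harmonic]

theorem tendsto_one_div_linear (a b : ℝ) (ha : 0 < a) :
    Tendsto (fun n : ℕ => 1 / (a * (n : ℝ) + b)) atTop (𝓝 0) := by
  simp only [one_div]
  exact tendsto_inv_atTop_zero.comp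
    (tendsto_atTop_add_const_right _ _ (tendsto_natCast_atTop_atTop.const_mul_atTop ha))

theorem tendsto_oddHarmonic_div : Tendsto (fun n : ℕ => oddHarmonic n / n) atTop (𝓝 0) := by
  have := (tendsto_one_div_linear 2 1 two_pos).cesaro
  refine this.congr fun n => ?_
  rw [oddHarmonic, div_eq_inv_mul]

/-- `∑_{i < L} 1 / (2 i + 1)` and `∑_{i < L} 1 / (2 i + 1 + 2 n)` differ by `O_n` in the limit. -/
theorem tendsto_oddHarmonic_sub_add (n : ℕ) :
    Tendsto (fun L => oddHarmonic L - (oddHarmonic (L + n) - oddHarmonic n)) atTop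
      (𝓝 (oddHarmonic n)) := by
  have h : ∀ n : ℕ, Tendsto (fun L => oddHarmonic (L + n) - oddHarmonic L) atTop (𝓝 0) := by
    intro n
    induction n with
    | zero => simp
    | succ n ih =>
      have := ih.add (tendsto_one_div_linear 2 (2 * (n : ℝ) + 1) two_pos)
      rw [add_zero] at this
      refine this.congr fun L => ?_
      rw [show L + (n + 1) = L + n + 1 from rfl, oddHarmonic_succ]
      push_cast
      ring_nf
  have := (h n).const_sub (oddHarmonic n)
  rw [sub_zero] at this
  exact this.congr fun L => by ring

theorem sum_shifted_odd (L n : ℕ) :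
    ∑ i ∈ range L, 1 / (2 * (i : ℝ) + 2 * n + 1) = oddHarmonic (L + n) - oddHarmonic n := by
  induction L with
  | zero => simp
  | succ L ih =>
    rw [sum_range_succ, ih, show L + 1 + n = L + n + 1 by ring, oddHarmonic_succ]
    push_cast
    ring_nf

theorem two_mul_sum_oddHarmonic_div (L : ℕ) :
    2 * ∑ p ∈ range L, oddHarmonic p / (2 * (p : ℝ) + 1)
      = oddHarmonic L ^ 2 - oddHarmonicSq L := by
  induction L with
  | zero => simp [oddHarmonicSq]
  | succ L ih =>
    rw [sum_range_succ, mul_add, ih, oddHarmonic_succ, oddHarmonicSq, oddHarmonicSq,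
      sum_range_succ]
    field_simp
    ring

theorem hasSum_odd_sq : HasSum (fun i : ℕ => 1 / (2 * (i : ℝ) + 1) ^ 2) (Real.pi ^ 2 / 8) := by
  have h := hasSum_zeta_two
  have he : HasSum (fun i : ℕ => 1 / ((2 * i : ℕ) : ℝ) ^ 2) (Real.pi ^ 2 / 6 / 4) := by
    have hc : (fun i : ℕ => 1 / ((2 * i : ℕ) : ℝ) ^ 2) = fun i : ℕ => 1 / (i : ℝ) ^ 2 / 4 := by
      funext i
      push_cast
      rw [mul_pow]
      ring
    rw [hc]
    exact h.div_const 4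
  have hs : Summable fun i : ℕ => 1 / ((2 * i + 1 : ℕ) : ℝ) ^ 2 :=
    (Real.summable_one_div_nat_pow.2 one_lt_two).comp_injective
      (i := fun i : ℕ => 2 * i + 1) fun a b hab => by simpa using hab
  have heq := (HasSum.even_add_odd (f := fun n : ℕ => 1 / (n : ℝ) ^ 2) he hs.hasSum).unique h
  have : ∑' i : ℕ, 1 / ((2 * i + 1 : ℕ) : ℝ) ^ 2 = Real.pi ^ 2 / 8 := by linarith
  rw [← this]
  convert hs.hasSum using 3 with i
  push_cast
  rfl

end OddHarmonic

section Corner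

/-- The sum of `c a * c b` over `a, b < L` with `a + b ≥ L - 1`. -/
def cornerSum (c : ℕ → ℝ) (L : ℕ) : ℝ :=
  ∑ a ∈ range L, ∑ b ∈ range (a + 1), c a * c (L - 1 - b)

theorem cornerSum_eq (c : ℕ → ℝ) (L : ℕ) :
    cornerSum c L = (∑ a ∈ range L, c a) ^ 2
      - ∑ p ∈ range L, ∑ a ∈ range p, c a * c (p - 1 - a) := by
  have h1 : ∑ p ∈ range L, ∑ a ∈ range p, c a * c (p - 1 - a)
      = ∑ a ∈ range L, ∑ b ∈ range (L - (a + 1)), c a * c b := by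
    cases L with
    | zero => simp
    | succ L =>
      rw [sum_strict_triangle, sum_range_succ]
      simp only [Nat.sub_self, range_zero, sum_empty, add_zero, Nat.add_sub_add_right]
      refine sum_congr rfl fun a _ => sum_congr rfl fun b _ => ?_
      congr 2
      omega
  have h2 : ∀ a ∈ range L, ∑ b ∈ range (a + 1), c a * c (L - 1 - b)
      + ∑ b ∈ range (L - (a + 1)), c a * c b = c a * ∑ b ∈ range L, c b := by
    intro a ha
    rw [mem_range] at ha
    obtain ⟨m, rfl⟩ := Nat.exists_eq_add_of_le (Nat.succ_le_of_lt ha)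
    rw [← sum_range_reflect c (a.succ + m), sum_range_add _ a.succ m,
      Nat.succ_eq_add_one, Nat.add_sub_cancel_left, ← sum_range_reflect _ m, mul_add, mul_sum,
      mul_sum]
    congr 1
    refine sum_congr rfl fun b _ => ?_
    congr 2
    omega
  rw [h1, eq_sub_iff_add_eq, cornerSum, ← sum_add_distrib, sum_congr rfl h2, ← sum_mul, sq]

theorem cornerSum_succ (c : ℕ → ℝ) (L : ℕ) :
    cornerSum c (L + 1) = ∑ a ∈ range (L + 1), c a * c (L - a)
      + cornerSum (fun a => c (a + 1)) L := by
  simp only [cornerSum, Nat.add_sub_cancel]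
  have h : ∀ a, ∑ b ∈ range (a + 1), c a * c (L - b)
      = ∑ b ∈ range a, c a * c (L - b) + c a * c (L - a) := fun a => sum_range_succ _ _
  simp_rw [h]
  rw [sum_add_distrib, add_comm, sum_range_succ' (fun a => ∑ b ∈ range a, c a * c (L - b))]
  simp only [range_zero, sum_empty, add_zero]
  congr 1
  refine sum_congr rfl fun a ha => sum_congr rfl fun b hb => ?_
  rw [mem_range] at ha hb
  congr 2
  omega

theorem cornerSum_le_cornerSum (c d : ℕ → ℝ) (h0 : ∀ a, 0 ≤ c a) (h : ∀ a, c a ≤ d a) (L : ℕ) :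
    cornerSum c L ≤ cornerSum d L :=
  sum_le_sum fun a _ => sum_le_sum fun _ _ =>
    mul_le_mul (h a) (h _) (h0 _) ((h0 a).trans (h a))

/-- Convolution of the sequence `1 / (2 a + s)` with itself. -/
theorem sum_convolution (s : ℝ) (hs : 0 < s) (p : ℕ) :
    ∑ a ∈ range p, 1 / (2 * (a : ℝ) + s) * (1 / (2 * ((p - 1 - a : ℕ) : ℝ) + s))
      = (∑ a ∈ range p, 1 / (2 * (a : ℝ) + s)) / (p + s - 1) := by
  have h : ∀ a ∈ range p, 1 / (2 * (a : ℝ) + s) * (1 / (2 * ((p - 1 - a : ℕ) : ℝ) + s))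
      = (1 / (2 * (a : ℝ) + s) + 1 / (2 * ((p - 1 - a : ℕ) : ℝ) + s)) / (2 * (p + s - 1)) := by
    intro a ha
    rw [mem_range] at ha
    obtain ⟨b, rfl⟩ := Nat.exists_eq_add_of_lt ha
    have : a + b + 1 - 1 - a = b := by omega
    rw [this]
    have h1 : 2 * (a : ℝ) + s ≠ 0 := by positivity
    have h2 : 2 * (b : ℝ) + s ≠ 0 := by positivity
    have h3 : ((a + b + 1 : ℕ) : ℝ) + s - 1 ≠ 0 := by
      push_cast
      have : (a : ℝ) + b + 1 + s - 1 = a + b + s := by ring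
      rw [this]
      positivity
    field_simp
    push_cast
    ring
  rw [sum_congr rfl h, ← sum_div, sum_add_distrib,
    sum_range_reflect (fun a => 1 / (2 * (a : ℝ) + s)) p, ← two_mul, mul_div_mul_left _ _ two_ne_zero]

theorem cornerSum_odd (L : ℕ) :
    cornerSum (fun a => 1 / (2 * (a : ℝ) + 1)) L
      = oddHarmonic L ^ 2 - 2 * ∑ p ∈ range L, oddHarmonic p / (2 * (p : ℝ)) := by
  rw [cornerSum_eq, mul_sum]
  congr 1
  refine sum_congr rfl fun p _ => ?_
  rw [sum_convolution 1 one_pos, oddHarmonic]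
  simp only [add_sub_cancel_right]
  rw [← mul_div_assoc, mul_div_mul_left _ _ two_ne_zero]

theorem cornerSum_even (L : ℕ) :
    cornerSum (fun a => 1 / (2 * (a : ℝ) + 2)) L
      = ∑ a ∈ range L, (1 / (2 * (a : ℝ) + 2)) ^ 2 := by
  rw [cornerSum_eq]
  simp_rw [sum_convolution 2 two_pos]
  induction L with
  | zero => simp
  | succ L ih =>
    rw [sum_range_succ, sum_range_succ _ L, sum_range_succ (fun a : ℕ => (1 / (2 * (a : ℝ) + 2)) ^ 2),
      ← ih]
    have : (L : ℝ) + 2 - 1 = L + 1 := by ring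
    rw [this]
    field_simp
    ring

theorem hasSum_even_sq : HasSum (fun a : ℕ => (1 / (2 * (a : ℝ) + 2)) ^ 2) (Real.pi ^ 2 / 24) := by
  have h := (hasSum_nat_add_iff' 1).2 hasSum_zeta_two
  have h' := h.div_const 4
  norm_num at h'
  rw [div_div] at h'
  norm_num at h'
  refine h'.congr_fun fun a => ?_
  field_simp
  ring

theorem tendsto_cornerSum_odd :
    Tendsto (cornerSum fun a => 1 / (2 * (a : ℝ) + 1)) atTop (𝓝 (Real.pi ^ 2 / 24)) := by
  have hE := hasSum_even_sq.tendsto_sum_nat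
  simp_rw [← cornerSum_even] at hE
  rw [← tendsto_add_atTop_iff_nat 1]
  have hU := ((tendsto_add_atTop_iff_nat 1).2 tendsto_oddHarmonic_div).add hE
  rw [zero_add] at hU
  refine tendsto_of_tendsto_of_tendsto_of_le_of_le ((tendsto_add_atTop_iff_nat 1).2 hE) hU
    (fun L => ?_) (fun L => ?_)
  · refine cornerSum_le_cornerSum _ _ (fun a => by positivity) (fun a => ?_) _
    gcongr
    norm_num
  · change cornerSum _ (L + 1) ≤ _
    rw [cornerSum_succ]
    have h := sum_convolution 1 one_pos (L + 1)
    simp only [Nat.add_sub_cancel, add_sub_cancel_right] at h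
    rw [h, oddHarmonic]
    gcongr
    refine cornerSum_le_cornerSum _ _ (fun a => by positivity) (fun a => ?_) _
    push_cast
    exact one_div_le_one_div_of_le (by positivity) (by linarith)

/-- `∑_{p ≥ 0} O_p (1 / (2 p) - 1 / (2 p + 2 k + 1))`, with `O_p` the odd harmonic numbers. -/
theorem tendsto_sum_oddHarmonic_mul_sub (k : ℕ) :
    Tendsto (fun L => ∑ p ∈ range L,
        oddHarmonic p * (1 / (2 * (p : ℝ)) - 1 / (2 * (p : ℝ) + 2 * k + 1))) atTop
      (𝓝 (evenOddHarmonic k + Real.pi ^ 2 / 24)) := by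
  induction k with
  | zero =>
    have h := (hasSum_odd_sq.tendsto_sum_nat.sub tendsto_cornerSum_odd).div_const 2
    have e : (Real.pi ^ 2 / 8 - Real.pi ^ 2 / 24) / 2 = evenOddHarmonic 0 + Real.pi ^ 2 / 24 := by
      simp [evenOddHarmonic]; ring
    rw [e] at h
    refine h.congr fun L => ?_
    have h1 := two_mul_sum_oddHarmonic_div L
    have h2 := cornerSum_odd L
    rw [oddHarmonicSq] at h1
    have h3 : ∑ p ∈ range L,
        oddHarmonic p * (1 / (2 * (p : ℝ)) - 1 / (2 * (p : ℝ) + 2 * (0 : ℕ) + 1))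
        = ∑ p ∈ range L, oddHarmonic p / (2 * (p : ℝ))
          - ∑ p ∈ range L, oddHarmonic p / (2 * (p : ℝ) + 1) := by
      rw [← sum_sub_distrib]
      refine sum_congr rfl fun p _ => ?_
      push_cast
      ring
    rw [h3, h2]
    linarith
  | succ k ih =>
    have abel : ∀ L : ℕ, ∑ p ∈ range L, oddHarmonic p *
        (1 / (2 * (p : ℝ) + 2 * k + 1) - 1 / (2 * (p : ℝ) + 2 * (k + 1 : ℕ) + 1))
        = (oddHarmonic L - (oddHarmonic (L + (k + 1)) - oddHarmonic (k + 1))) / (2 * k + 2)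
          - oddHarmonic L / (2 * (L : ℝ) + 2 * k + 1) := by
      intro L
      rw [← sum_shifted_odd]
      induction L with
      | zero => simp
      | succ L ihL =>
        rw [sum_range_succ, ihL, oddHarmonic_succ, sum_range_succ]
        push_cast
        generalize ∑ i ∈ range L, 1 / (2 * (i : ℝ) + 2 * ((k : ℝ) + 1) + 1) = s
        field_simp
        ring
    have hz : Tendsto (fun L : ℕ => oddHarmonic L / (2 * (L : ℝ) + 2 * k + 1)) atTop (𝓝 0) := by
      refine squeeze_zero' (.of_forall fun L => div_nonneg (oddHarmonic_nonneg L) (by positivity))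
        ?_ tendsto_oddHarmonic_div
      filter_upwards [eventually_gt_atTop 0] with L hL
      have : (0 : ℝ) < L := by exact_mod_cast hL
      refine div_le_div_of_nonneg_left (oddHarmonic_nonneg L) this ?_
      linarith [(Nat.cast_nonneg k : (0 : ℝ) ≤ k)]
    have hstep := ih.add (((tendsto_oddHarmonic_sub_add (k + 1)).div_const (2 * (k : ℝ) + 2)).sub hz)
    have e : evenOddHarmonic k + Real.pi ^ 2 / 24 + (oddHarmonic (k + 1) / (2 * (k : ℝ) + 2) - 0)
        = evenOddHarmonic (k + 1) + Real.pi ^ 2 / 24 := by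
      rw [evenOddHarmonic, evenOddHarmonic, sum_range_succ _ (k + 1)]
      push_cast
      ring
    rw [e] at hstep
    refine hstep.congr fun L => ?_
    rw [← abel, ← sum_add_distrib]
    refine sum_congr rfl fun p _ => ?_
    ring

end Corner

section PartialFractions

theorem sum_pow_mul_pow_mul_pow (x y z : ℝ) (v : ℕ) :
    (∑ a ∈ Icc 2 (v + 2), ∑ b ∈ Icc 1 (v + 4 - a - 1), x ^ a * y ^ b * z ^ (v + 4 - a - b))
        * ((x - y) * (x - z) * (y - z))
      = x ^ 2 * y * z * (y * (x ^ (v + 1) - y ^ (v + 1)) * (x - z)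
          - z * (x ^ (v + 1) - z ^ (v + 1)) * (x - y)) := by
  have inner : ∀ a ∈ range (v + 1),
      (∑ b ∈ Icc 1 (v + 4 - (2 + a) - 1), x ^ (2 + a) * y ^ b * z ^ (v + 4 - (2 + a) - b))
        * (y - z)
      = x ^ 2 * y * z * (y * (x ^ a * y ^ (v - a)) - z * (x ^ a * z ^ (v - a))) := by
    intro a ha
    rw [mem_range] at ha
    obtain ⟨n, rfl⟩ := Nat.exists_eq_add_of_le (Nat.le_of_lt_succ ha)
    have e : a + n + 4 - (2 + a) - 1 = n + 1 := by omega
    have h := geom_sum₂_mul y z (n + 1)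
    rw [e, ← Ico_add_one_right_eq_Icc, sum_Ico_eq_sum_range]
    have h2 : ∑ b ∈ range (n + 1 + 1 - 1), x ^ (2 + a) * y ^ (1 + b)
          * z ^ (a + n + 4 - (2 + a) - (1 + b))
        = x ^ (2 + a) * y * z * ∑ b ∈ range (n + 1), y ^ b * z ^ (n + 1 - 1 - b) := by
      rw [mul_sum, Nat.add_sub_cancel]
      refine sum_congr rfl fun b hb => ?_
      rw [mem_range] at hb
      rw [show a + n + 4 - (2 + a) - (1 + b) = (n + 1 - 1 - b) + 1 by omega]
      ring
    rw [h2, mul_assoc, h, Nat.add_sub_cancel_left]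
    ring
  have hxy := geom_sum₂_mul x y (v + 1)
  have hxz := geom_sum₂_mul x z (v + 1)
  simp only [Nat.add_sub_cancel] at hxy hxz
  rw [← Ico_add_one_right_eq_Icc, sum_Ico_eq_sum_range, show v + 2 + 1 - 2 = v + 1 by omega,
    mul_comm ((x - y) * (x - z)), ← mul_assoc, sum_mul, sum_congr rfl inner, ← mul_sum,
    sum_sub_distrib, ← mul_sum, ← mul_sum, ← hxy, ← hxz]
  ring

theorem sum_one_div_pow_eq (l m n : ℝ) (hn : 0 < n) (hm : n < m) (hl : m < l) (v : ℕ) :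
    ∑ a ∈ Icc 2 (v + 2), ∑ b ∈ Icc 1 (v + 4 - a - 1),
        8 / (l ^ a * m ^ b * n ^ (v + 4 - a - b))
      = 8 * (1 / l ^ (v + 2) * (1 / ((l - m) * (l - n)))
          - 1 / m ^ (v + 2) * ((1 / (l - m) - 1 / l) * (1 / (m - n)))
          + 1 / n ^ (v + 2) * ((1 / (l - n) - 1 / l) * (1 / (m - n)))) := by
  have hm0 : 0 < m := hn.trans hm
  have hl0 : 0 < l := hm0.trans hl
  have h := sum_pow_mul_pow_mul_pow (1 / l) (1 / m) (1 / n) v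
  have e : ∑ a ∈ Icc 2 (v + 2), ∑ b ∈ Icc 1 (v + 4 - a - 1),
        8 / (l ^ a * m ^ b * n ^ (v + 4 - a - b))
      = 8 * ∑ a ∈ Icc 2 (v + 2), ∑ b ∈ Icc 1 (v + 4 - a - 1),
        (1 / l) ^ a * (1 / m) ^ b * (1 / n) ^ (v + 4 - a - b) := by
    simp only [mul_sum]
    refine sum_congr rfl fun a _ => sum_congr rfl fun b _ => ?_
    simp only [div_eq_mul_inv, mul_inv]
    ring
  have h1 : l - m ≠ 0 := by linarith
  have h2 : l - n ≠ 0 := by linarith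
  have h3 : m - n ≠ 0 := by linarith
  have hd : (1 / l - 1 / m) * (1 / l - 1 / n) * (1 / m - 1 / n) ≠ 0 := by
    rw [div_sub_div _ _ hl0.ne' hm0.ne', div_sub_div _ _ hl0.ne' hn.ne',
      div_sub_div _ _ hm0.ne' hn.ne']
    simp only [one_mul, mul_one]
    have h1' : m - l ≠ 0 := by linarith
    have h2' : n - l ≠ 0 := by linarith
    have h3' : n - m ≠ 0 := by linarith
    positivity
  rw [e]
  congr 1
  rw [eq_div_of_mul_eq hd h, div_eq_iff hd]
  simp only [pow_succ, one_div, inv_pow]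
  have hlv : l ^ v ≠ 0 := by positivity
  have hmv : m ^ v ≠ 0 := by positivity
  have hnv : n ^ v ≠ 0 := by positivity
  generalize l ^ v = p at *
  generalize m ^ v = q at *
  generalize n ^ v = r at *
  field_simp
  ring

end PartialFractions

section FiniteIdentity

theorem sum_reflected_odd (n : ℕ) :
    ∑ q ∈ range n, 1 / (2 * (n : ℝ) - 2 * q - 1) = oddHarmonic n := by
  rw [oddHarmonic, ← sum_range_reflect]
  refine sum_congr rfl fun q hq => ?_
  rw [mem_range] at hq
  obtain ⟨m, rfl⟩ := Nat.exists_eq_add_of_lt hq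
  rw [show q + m + 1 - 1 - q = m by omega]
  push_cast
  congr 1
  ring

theorem sum_one_div_sub_mul_sub (i : ℕ) :
    ∑ j ∈ range (i + 1), ∑ k ∈ range j,
        1 / ((2 * (i : ℝ) + 1 - 2 * j) * (2 * (i : ℝ) + 1 - (2 * k + 1)))
      = evenOddHarmonic i := by
  rw [sum_strict_triangle, evenOddHarmonic, sum_range_succ', ← sum_range_reflect]
  simp only [oddHarmonic_zero, zero_div, add_zero]
  refine sum_congr rfl fun k hk => ?_
  rw [mem_range] at hk
  obtain ⟨m, rfl⟩ := Nat.exists_eq_add_of_lt hk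
  rw [show k + m + 1 - 1 - k = m by omega, show k + m + 1 - m = k + 1 by omega,
    ← sum_reflected_odd, sum_div]
  refine sum_congr rfl fun q _ => ?_
  rw [div_div]
  push_cast
  congr 1
  ring

theorem sum_even_part (β : ℕ → ℝ) (L : ℕ) :
    ∑ i ∈ range L, ∑ j ∈ range (i + 1), ∑ k ∈ range j,
        β j * ((1 / (2 * (i : ℝ) + 1 - 2 * j) - 1 / (2 * (i : ℝ) + 1))
          * (1 / (2 * (j : ℝ) - (2 * k + 1))))
      = ∑ j ∈ range L, β j * (oddHarmonic j
          * (oddHarmonic (L - j) - (oddHarmonic L - oddHarmonic j))) := by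
  rw [sum_triangle]
  refine sum_congr rfl fun j hj => ?_
  have hj' : L - j + j = L := Nat.sub_add_cancel (mem_range.1 hj).le
  have h := sum_shifted_odd (L - j) j
  rw [hj'] at h
  rw [← h]
  conv_rhs => rw [oddHarmonic.eq_def (L - j), ← sum_sub_distrib, mul_sum, mul_sum]
  refine sum_congr rfl fun p _ => ?_
  rw [← sum_reflected_odd j, sum_mul, mul_sum]
  refine sum_congr rfl fun k _ => ?_
  push_cast
  rw [mul_comm (1 / (2 * (j : ℝ) - 2 * k - 1))]
  ring_nf

theorem sum_odd_part (α : ℕ → ℝ) (L : ℕ) :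
    ∑ i ∈ range L, ∑ j ∈ range (i + 1), ∑ k ∈ range j,
        α k * ((1 / (2 * (i : ℝ) + 1 - (2 * k + 1)) - 1 / (2 * (i : ℝ) + 1))
          * (1 / (2 * (j : ℝ) - (2 * k + 1))))
      = ∑ k ∈ range L, α k * ∑ p ∈ range (L - k),
          oddHarmonic p * (1 / (2 * (p : ℝ)) - 1 / (2 * (p : ℝ) + 2 * k + 1)) := by
  have h : ∀ i : ℕ, ∑ j ∈ range (i + 1), ∑ k ∈ range j,
        α k * ((1 / (2 * (i : ℝ) + 1 - (2 * k + 1)) - 1 / (2 * (i : ℝ) + 1))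
          * (1 / (2 * (j : ℝ) - (2 * k + 1))))
      = ∑ k ∈ range (i + 1), α k * (oddHarmonic (i - k)
          * (1 / (2 * (i : ℝ) + 1 - (2 * k + 1)) - 1 / (2 * (i : ℝ) + 1))) := by
    intro i
    rw [sum_strict_triangle, sum_range_succ]
    simp only [Nat.sub_self, oddHarmonic_zero, zero_mul, mul_zero, add_zero]
    refine sum_congr rfl fun k _ => ?_
    rw [oddHarmonic, sum_mul, mul_sum]
    refine sum_congr rfl fun q _ => ?_
    push_cast
    rw [mul_comm (1 / (2 * (q : ℝ) + 1))]
    ring_nf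
  simp_rw [h]
  rw [sum_triangle]
  refine sum_congr rfl fun k _ => ?_
  rw [mul_sum]
  refine sum_congr rfl fun p _ => ?_
  rw [Nat.add_sub_cancel_left]
  push_cast
  ring_nf

theorem sum_triple_partial (v L : ℕ) :
    ∑ a ∈ Icc 2 (v + 2), ∑ b ∈ Icc 1 (v + 4 - a - 1),
        ∑ i ∈ range L, ∑ j ∈ range (i + 1), ∑ k ∈ range j,
          8 / ((2 * (i : ℝ) + 1) ^ a * (2 * (j : ℝ)) ^ b * (2 * (k : ℝ) + 1) ^ (v + 4 - a - b))
      = 8 * (∑ i ∈ range L, 1 / (2 * (i : ℝ) + 1) ^ (v + 2) * evenOddHarmonic i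
        - ∑ j ∈ range L, 1 / (2 * (j : ℝ)) ^ (v + 2) * (oddHarmonic j
            * (oddHarmonic (L - j) - (oddHarmonic L - oddHarmonic j)))
        + ∑ k ∈ range L, 1 / (2 * (k : ℝ) + 1) ^ (v + 2) * ∑ p ∈ range (L - k),
            oddHarmonic p * (1 / (2 * (p : ℝ)) - 1 / (2 * (p : ℝ) + 2 * k + 1))) := by
  rw [← sum_odd_part (fun k => 1 / (2 * (k : ℝ) + 1) ^ (v + 2)),
    ← sum_even_part (fun j => 1 / (2 * (j : ℝ)) ^ (v + 2))]
  simp_rw [← sum_one_div_sub_mul_sub, mul_sum]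
  simp_rw [← sum_sub_distrib, ← sum_add_distrib, mul_sum]
  have swap : ∀ (s : Finset ℕ) (f : ℕ → ℕ → ℕ → ℝ),
      ∑ a ∈ Icc 2 (v + 2), ∑ b ∈ Icc 1 (v + 4 - a - 1), ∑ i ∈ s, f a b i
        = ∑ i ∈ s, ∑ a ∈ Icc 2 (v + 2), ∑ b ∈ Icc 1 (v + 4 - a - 1), f a b i := by
    intro s f
    rw [sum_comm]
    exact sum_congr rfl fun a _ => sum_comm
  refine (swap _ _).trans (sum_congr rfl fun i _ => (swap _ _).trans (sum_congr rfl fun j hj =>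
    (swap _ _).trans (sum_congr rfl fun k hk => ?_)))
  rw [mem_range] at hj hk
  have hk' : (k : ℝ) + 1 ≤ j := by exact_mod_cast hk
  have hj' : (j : ℝ) ≤ i := by exact_mod_cast Nat.le_of_lt_succ hj
  exact sum_one_div_pow_eq _ _ _ (by positivity) (by linarith) (by linarith) v

end FiniteIdentity

section Limits

theorem abs_div_pow_le (x C : ℝ) (hx : |x| ≤ C) (a b c l m n : ℕ) (ha : 2 ≤ a) (hb : 1 ≤ b)
    (hc : 1 ≤ c) (hl : 0 < l) (hm : 0 < m) (hn : 0 < n) :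
    |x / ((l : ℝ) ^ a * (m : ℝ) ^ b * (n : ℝ) ^ c)| ≤ C / ((l : ℝ) ^ 2 * m * n) := by
  have hl' : (1 : ℝ) ≤ l := by exact_mod_cast hl
  have hm' : (1 : ℝ) ≤ m := by exact_mod_cast hm
  have hn' : (1 : ℝ) ≤ n := by exact_mod_cast hn
  rw [abs_div, abs_of_pos (a := (l : ℝ) ^ a * (m : ℝ) ^ b * (n : ℝ) ^ c) (by positivity)]
  have h1 : (l : ℝ) ^ 2 ≤ (l : ℝ) ^ a := pow_le_pow_right₀ hl' ha
  have h2 : (m : ℝ) ≤ (m : ℝ) ^ b := le_self_pow₀ hm' (by omega)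
  have h3 : (n : ℝ) ≤ (n : ℝ) ^ c := le_self_pow₀ hn' (by omega)
  have hC : 0 ≤ C := (abs_nonneg x).trans hx
  gcongr

theorem tendsto_tValue3 (a b c : ℕ) (ha : 2 ≤ a) (hb : 1 ≤ b) (hc : 1 ≤ c) :
    Tendsto (fun L => ∑ i ∈ range L, ∑ j ∈ range (i + 1), ∑ k ∈ range j,
        8 / ((2 * (i : ℝ) + 1) ^ a * (2 * (j : ℝ)) ^ b * (2 * (k : ℝ) + 1) ^ c)) atTop
      (𝓝 (tValue3 a b c)) := by
  have h := tendsto_sum_range_two_mul _ (summable_triple (fun l m n =>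
    if l % 2 = 1 ∧ m % 2 = 0 ∧ n % 2 = 1 then
      8 / ((l : ℝ) ^ a * (m : ℝ) ^ b * (n : ℝ) ^ c) else 0) 8 ?_) (by simp)
  · refine h.congr fun L => ?_
    rw [sum_range_two_mul]
    refine sum_congr rfl fun i _ => ?_
    have h0 : 2 * i % 2 = 0 := by omega
    have h1 : (2 * i + 1) % 2 = 1 := by omega
    simp only [h0, h1, zero_ne_one, false_and, if_false, sum_const_zero, zero_add, true_and]
    have h2 : ∀ m n : ℕ, (if m % 2 = 0 ∧ n % 2 = 1 then
          8 / (((2 * i + 1 : ℕ) : ℝ) ^ a * (m : ℝ) ^ b * (n : ℝ) ^ c) else 0)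
        = if m % 2 = 0 then (if n % 2 = 1 then
          8 / (((2 * i + 1 : ℕ) : ℝ) ^ a * (m : ℝ) ^ b * (n : ℝ) ^ c) else 0) else 0 :=
      fun m n => by rw [ite_and]
    simp_rw [h2]
    simp only [← ite_sum_zero, sum_Ico_ite_odd]
    rw [sum_Ico_ite_even _ (by simp)]
    refine sum_congr rfl fun j _ => ?_
    rw [Nat.mul_div_cancel_left j two_pos]
    push_cast
    rfl
  · intro l m n hl hm hn
    split_ifs
    · exact abs_div_pow_le 8 8 (by norm_num) a b c l m n ha hb hc hl hm hn
    · rw [abs_zero]; positivity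

theorem tendsto_tValue2 (a b : ℕ) (ha : 2 ≤ a) (hb : 1 ≤ b) :
    Tendsto (fun L => ∑ j ∈ range L, ∑ k ∈ range j,
        4 / ((2 * (j : ℝ)) ^ a * (2 * (k : ℝ) + 1) ^ b)) atTop (𝓝 (tValue2 a b)) := by
  have h := tendsto_sum_range_two_mul _ (summable_double (fun l m =>
    if l % 2 = 0 ∧ m % 2 = 1 then 4 / ((l : ℝ) ^ a * (m : ℝ) ^ b) else 0) 4 ?_) (by simp)
  · refine h.congr fun L => ?_
    rw [sum_range_two_mul]
    refine sum_congr rfl fun j _ => ?_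
    have h0 : 2 * j % 2 = 0 := by omega
    have h1 : (2 * j + 1) % 2 = 1 := by omega
    simp only [h0, h1, one_ne_zero, false_and, if_false, sum_const_zero, add_zero, true_and,
      sum_Ico_ite_odd]
    rw [Nat.mul_div_cancel_left j two_pos]
    push_cast
    rfl
  · intro l m hl hm
    split_ifs
    · simpa using abs_div_pow_le 4 4 (by norm_num) a b 1 l m 1 ha hb le_rfl hl hm one_pos
    · rw [abs_zero]; positivity

theorem tendsto_tValue1 (a : ℕ) (ha : 2 ≤ a) :
    Tendsto (fun L => ∑ i ∈ range L, 2 / (2 * (i : ℝ) + 1) ^ a) atTop (𝓝 (tValue1 a)) := by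
  have h := tendsto_sum_range_two_mul
    (fun m : ℕ => if m % 2 = 1 then 2 / (m : ℝ) ^ a else 0) ?_ (by simp)
  · refine h.congr fun L => ?_
    rw [sum_range_two_mul]
    refine sum_congr rfl fun i _ => ?_
    have h0 : 2 * i % 2 = 0 := by omega
    have h1 : (2 * i + 1) % 2 = 1 := by omega
    simp [h0, h1]
  · refine summable_of_le_harmonic_sq _ 2 (by simp) fun l hl => ?_
    have h1 : (2 : ℝ) / (l : ℝ) ^ 2 ≤ 2 / (l : ℝ) ^ 2 * (1 + harmonic l) ^ 2 :=
      le_mul_of_one_le_right (by positivity)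
        (one_le_pow₀ (by linarith [harmonic_cast_nonneg l]))
    split_ifs
    · refine le_trans ?_ h1
      simpa using abs_div_pow_le 2 2 (by norm_num) a 1 1 l 1 1 ha le_rfl le_rfl hl one_pos one_pos
    · rw [abs_zero]; positivity

theorem tValue1_two : tValue1 2 = Real.pi ^ 2 / 4 := by
  have h := hasSum_odd_sq.tendsto_sum_nat.const_mul 2
  refine tendsto_nhds_unique (tendsto_tValue1 2 le_rfl) ?_
  rw [show Real.pi ^ 2 / 4 = 2 * (Real.pi ^ 2 / 8) by ring]
  refine h.congr fun L => ?_
  rw [mul_sum]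
  exact sum_congr rfl fun i _ => by ring

theorem tendsto_eulerSum3 (u : ℕ) (hu : 2 ≤ u) (e₁ e₂ e₃ : ℝ) (h₁ : |e₁| = 1) (h₂ : |e₂| = 1)
    (h₃ : |e₃| = 1) :
    Tendsto (fun L => ∑ l ∈ range (2 * L), ∑ m ∈ Ico 1 l, ∑ n ∈ Ico 1 m,
        e₁ ^ l * e₂ ^ m * e₃ ^ n / ((l : ℝ) ^ u * (m : ℝ) ^ 1 * (n : ℝ) ^ 1)) atTop
      (𝓝 (eulerSum3 u 1 1 e₁ e₂ e₃)) := by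
  refine tendsto_sum_range_two_mul _ (summable_triple (fun l m n =>
    e₁ ^ l * e₂ ^ m * e₃ ^ n / ((l : ℝ) ^ u * (m : ℝ) ^ 1 * (n : ℝ) ^ 1)) 1 ?_) (by simp)
  intro l m n hl hm hn
  refine abs_div_pow_le _ 1 ?_ u 1 1 l m n hu le_rfl le_rfl hl hm hn
  simp [abs_mul, abs_pow, h₁, h₂, h₃]

theorem sign_combination_odd (i m n : ℕ) (D : ℝ) :
    1 ^ (2 * i + 1) * (-1) ^ m * 1 ^ n / D - (-1) ^ (2 * i + 1) * 1 ^ m * 1 ^ n / D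
      + (-1) ^ (2 * i + 1) * 1 ^ m * (-1) ^ n / D - 1 ^ (2 * i + 1) * (-1) ^ m * (-1) ^ n / D
      = if m % 2 = 0 then (if n % 2 = 1 then 4 / D else 0) else 0 := by
  rcases Nat.even_or_odd m with hm | hm <;> rcases Nat.even_or_odd n with hn | hn <;>
    simp [hm.neg_one_pow, hn.neg_one_pow, pow_succ, pow_mul, Nat.even_iff.1, Nat.odd_iff.1, hm, hn]
  ring

theorem sign_combination_even (j m n : ℕ) (D : ℝ) :
    1 ^ (2 * j) * (-1) ^ m * 1 ^ n / D - (-1) ^ (2 * j) * 1 ^ m * 1 ^ n / D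
      + (-1) ^ (2 * j) * 1 ^ m * (-1) ^ n / D - 1 ^ (2 * j) * (-1) ^ m * (-1) ^ n / D
      = if m % 2 = 1 then (if n % 2 = 1 then -4 / D else 0) else 0 := by
  rcases Nat.even_or_odd m with hm | hm <;> rcases Nat.even_or_odd n with hn | hn <;>
    simp [hm.neg_one_pow, hn.neg_one_pow, pow_mul, Nat.even_iff.1, Nat.odd_iff.1, hm, hn]
  ring

theorem tendsto_eulerSum3_combination (u : ℕ) (hu : 2 ≤ u) :
    Tendsto (fun L => 4 * ∑ i ∈ range L, 1 / (2 * (i : ℝ) + 1) ^ u * evenOddHarmonic i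
        - 2 * ∑ j ∈ range L, 1 / (2 * (j : ℝ)) ^ u * (oddHarmonic j ^ 2 - oddHarmonicSq j)) atTop
      (𝓝 (eulerSum3 u 1 1 1 (-1) 1 - eulerSum3 u 1 1 (-1) 1 1
          + eulerSum3 u 1 1 (-1) 1 (-1) - eulerSum3 u 1 1 1 (-1) (-1))) := by
  have h := (((tendsto_eulerSum3 u hu 1 (-1) 1 (by simp) (by simp) (by simp)).sub
    (tendsto_eulerSum3 u hu (-1) 1 1 (by simp) (by simp) (by simp))).add
    (tendsto_eulerSum3 u hu (-1) 1 (-1) (by simp) (by simp) (by simp))).sub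
    (tendsto_eulerSum3 u hu 1 (-1) (-1) (by simp) (by simp) (by simp))
  refine h.congr fun L => ?_
  simp_rw [← sum_sub_distrib, ← sum_add_distrib, ← sum_sub_distrib]
  rw [sum_range_two_mul, mul_sum, mul_sum, ← sum_sub_distrib]
  refine sum_congr rfl fun i _ => ?_
  simp_rw [sign_combination_odd, sign_combination_even]
  simp only [← ite_sum_zero, sum_Ico_ite_odd]
  rw [sum_Ico_ite_even _ (by simp), Nat.mul_div_cancel_left i two_pos, add_comm, sub_eq_add_neg]
  congr 1
  · rw [evenOddHarmonic, ← mul_assoc, mul_sum]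
    refine sum_congr rfl fun j _ => ?_
    rw [oddHarmonic, sum_div, mul_sum, Nat.mul_div_cancel_left j two_pos]
    refine sum_congr rfl fun k _ => ?_
    push_cast
    simp only [pow_one, div_eq_mul_inv, mul_inv]
    ring
  · rw [← two_mul_sum_oddHarmonic_div, mul_sum, mul_sum, mul_sum, ← sum_neg_distrib]
    refine sum_congr rfl fun p _ => ?_
    rw [oddHarmonic, sum_div, mul_sum, mul_sum, mul_sum, ← sum_neg_distrib,
      show (2 * p + 1) / 2 = p by omega]
    refine sum_congr rfl fun k _ => ?_
    push_cast
    simp only [pow_one, div_eq_mul_inv, mul_inv]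
    ring

theorem one_div_odd_pow_le (v i : ℕ) :
    1 / (2 * (i : ℝ) + 1) ^ (v + 2) ≤ 1 / ((i : ℝ) + 1) ^ 2 := by
  have hi : (0 : ℝ) ≤ i := Nat.cast_nonneg i
  refine one_div_le_one_div_of_le (by positivity) ?_
  calc ((i : ℝ) + 1) ^ 2 ≤ (2 * (i : ℝ) + 1) ^ 2 := by gcongr; linarith
    _ ≤ _ := pow_le_pow_right₀ (by linarith) (by omega)

theorem one_div_even_pow_le (v i : ℕ) :
    1 / (2 * (i : ℝ)) ^ (v + 2) ≤ 1 / ((i : ℝ) + 1) ^ 2 := by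
  rcases Nat.eq_zero_or_pos i with rfl | hi
  · simp
  have hi : (1 : ℝ) ≤ i := by exact_mod_cast hi
  refine one_div_le_one_div_of_le (by positivity) ?_
  calc ((i : ℝ) + 1) ^ 2 ≤ (2 * (i : ℝ)) ^ 2 := by gcongr; linarith
    _ ≤ _ := pow_le_pow_right₀ (by linarith) (by omega)

theorem summable_mul_of_le {α f : ℕ → ℝ} (h : ∀ i, 0 ≤ α i ∧ α i ≤ 1 / ((i : ℝ) + 1) ^ 2)
    (C : ℝ) (hf : ∀ i, 0 ≤ f i ∧ f i ≤ C * (1 + harmonic i) ^ 2) :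
    Summable fun i => α i * f i := by
  refine Summable.of_nonneg_of_le (fun i => mul_nonneg (h i).1 (hf i).1) (fun i => ?_)
    (summable_harmonic_sq_div_sq.mul_left C)
  calc α i * f i ≤ 1 / ((i : ℝ) + 1) ^ 2 * (C * (1 + harmonic i) ^ 2) :=
        mul_le_mul (h i).2 (hf i).2 (hf i).1 (by positivity)
    _ = _ := by ring

theorem summable_evenOddHarmonic (v : ℕ) (c : ℝ) (hc : 0 ≤ c) :
    Summable fun i : ℕ => 1 / (2 * (i : ℝ) + 1) ^ (v + 2) * (evenOddHarmonic i + c) := by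
  refine summable_mul_of_le (fun i => ⟨by positivity, one_div_odd_pow_le v i⟩) (1 + c)
    fun i => ⟨by have := evenOddHarmonic_nonneg i; positivity, ?_⟩
  have h0 := harmonic_cast_nonneg i
  have h1 := evenOddHarmonic_le i
  nlinarith [mul_nonneg hc h0, mul_nonneg hc (mul_nonneg h0 h0)]

theorem summable_oddHarmonic_sq (v : ℕ) :
    Summable fun j : ℕ => 1 / (2 * (j : ℝ)) ^ (v + 2) * oddHarmonic j ^ 2 := by
  refine summable_mul_of_le (fun i => ⟨by positivity, one_div_even_pow_le v i⟩) 1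
    fun i => ⟨by positivity, ?_⟩
  rw [one_mul]
  exact pow_le_pow_left₀ (oddHarmonic_nonneg i) (by linarith [oddHarmonic_le_harmonic i]) 2

theorem tendsto_even_part (v : ℕ) :
    Tendsto (fun L => ∑ j ∈ range L, 1 / (2 * (j : ℝ)) ^ (v + 2) * (oddHarmonic j
        * (oddHarmonic (L - j) - (oddHarmonic L - oddHarmonic j)))) atTop
      (𝓝 (∑' j : ℕ, 1 / (2 * (j : ℝ)) ^ (v + 2) * oddHarmonic j ^ 2)) := by
  refine tendsto_sum_range_of_dominated _ _ _ (summable_oddHarmonic_sq v) (fun j => ?_)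
    (fun L j hj => ?_) (fun j => by positivity)
  · rw [sq]
    refine Tendsto.const_mul _ (Tendsto.const_mul _ ?_)
    rw [← tendsto_add_atTop_iff_nat j]
    simpa using tendsto_oddHarmonic_sub_add j
  · obtain ⟨m, rfl⟩ := Nat.exists_eq_add_of_le hj.le
    have h1 : oddHarmonic m ≤ oddHarmonic (j + m) := oddHarmonic_mono (by omega)
    have h2 : 0 ≤ oddHarmonic m - (oddHarmonic (j + m) - oddHarmonic j) := by
      have h := sum_shifted_odd m j
      rw [add_comm j m, ← h, oddHarmonic, sub_nonneg]
      refine sum_le_sum fun i _ => one_div_le_one_div_of_le (by positivity) ?_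
      linarith [(Nat.cast_nonneg j : (0 : ℝ) ≤ j)]
    have h0 := oddHarmonic_nonneg j
    rw [Nat.add_sub_cancel_left, abs_of_nonneg (by positivity), sq]
    gcongr
    linarith

theorem tendsto_odd_part (v : ℕ) :
    Tendsto (fun L => ∑ k ∈ range L, 1 / (2 * (k : ℝ) + 1) ^ (v + 2) * ∑ p ∈ range (L - k),
        oddHarmonic p * (1 / (2 * (p : ℝ)) - 1 / (2 * (p : ℝ) + 2 * k + 1))) atTop
      (𝓝 (∑' k : ℕ, 1 / (2 * (k : ℝ) + 1) ^ (v + 2) *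
        (evenOddHarmonic k + Real.pi ^ 2 / 24))) := by
  refine tendsto_sum_range_of_dominated _ _ _
    (summable_evenOddHarmonic v (Real.pi ^ 2 / 24) (by positivity)) (fun k => ?_)
    (fun L k hk => ?_) (fun k => by have := evenOddHarmonic_nonneg k; positivity)
  · refine Tendsto.const_mul _ ?_
    rw [← tendsto_add_atTop_iff_nat k]
    simpa using tendsto_sum_oddHarmonic_mul_sub k
  · have hterm : ∀ p : ℕ,
        0 ≤ oddHarmonic p * (1 / (2 * (p : ℝ)) - 1 / (2 * (p : ℝ) + 2 * k + 1)) := by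
      intro p
      rcases Nat.eq_zero_or_pos p with rfl | hp
      · simp
      have hp' : (0 : ℝ) < p := by exact_mod_cast hp
      refine mul_nonneg (oddHarmonic_nonneg p) (sub_nonneg.2 ?_)
      refine one_div_le_one_div_of_le (by positivity) ?_
      linarith [(Nat.cast_nonneg k : (0 : ℝ) ≤ k)]
    have hmono : Monotone fun L => ∑ p ∈ range L,
        oddHarmonic p * (1 / (2 * (p : ℝ)) - 1 / (2 * (p : ℝ) + 2 * k + 1)) :=
      monotone_nat_of_le_succ fun L => by
        rw [sum_range_succ]
        linarith [hterm L]
    have h0 := sum_nonneg fun p (_ : p ∈ range (L - k)) => hterm p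
    rw [abs_of_nonneg (by positivity)]
    exact mul_le_mul_of_nonneg_left
      (hmono.ge_of_tendsto (tendsto_sum_oddHarmonic_mul_sub k) (L - k)) (by positivity)

end Limits

/-- Sum formula for triple T-values: for `w ≥ 4`, with `u = w − 2`,
`∑_{a+b+c=w, a≥2} T(a,b,c)
  = (2/3) T(2) T(u) − 2 T(u,2) + 4(ζ(u,1̄,1) − ζ(ū,1,1) + ζ(ū,1,1̄) − ζ(u,1̄,1̄))`. -/
theorem sum_triple_T (w : ℕ) (hw : 4 ≤ w) :
    ∑ a ∈ Finset.Icc 2 (w - 2), ∑ b ∈ Finset.Icc 1 (w - a - 1),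
        tValue3 a b (w - a - b)
      = 2 / 3 * tValue1 2 * tValue1 (w - 2) - 2 * tValue2 (w - 2) 2
        + 4 * (eulerSum3 (w - 2) 1 1 1 (-1) 1 - eulerSum3 (w - 2) 1 1 (-1) 1 1
          + eulerSum3 (w - 2) 1 1 (-1) 1 (-1) - eulerSum3 (w - 2) 1 1 1 (-1) (-1)) := by
  obtain ⟨v, rfl⟩ := Nat.exists_eq_add_of_le' hw
  rw [show v + 4 - 2 = v + 2 by omega]
  have hL : Tendsto _ atTop (𝓝 (∑ a ∈ Icc 2 (v + 2), ∑ b ∈ Icc 1 (v + 4 - a - 1),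
      tValue3 a b (v + 4 - a - b))) :=
    tendsto_finsetSum _ fun a ha => tendsto_finsetSum _ fun b hb => by
      rw [mem_Icc] at ha hb
      exact tendsto_tValue3 a b (v + 4 - a - b) ha.1 hb.1 (by omega)
  simp_rw [sum_triple_partial] at hL
  have hX := summable_evenOddHarmonic v 0 le_rfl
  simp only [add_zero] at hX
  have hZ := summable_evenOddHarmonic v (Real.pi ^ 2 / 24) (by positivity)
  have hY := summable_oddHarmonic_sq v
  have hL' := ((hX.hasSum.tendsto_sum_nat.sub (tendsto_even_part v)).add
    (tendsto_odd_part v)).const_mul 8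
  rw [tendsto_nhds_unique hL hL']
  have hR := (((tendsto_tValue1 (v + 2) (by omega)).const_mul (2 / 3 * tValue1 2)).sub
    ((tendsto_tValue2 (v + 2) 2 (by omega) one_le_two).const_mul 2)).add
    ((tendsto_eulerSum3_combination (v + 2) (by omega)).const_mul 4)
  refine tendsto_nhds_unique (((hX.hasSum.tendsto_sum_nat.sub hY.hasSum.tendsto_sum_nat).add
    hZ.hasSum.tendsto_sum_nat).const_mul 8) (hR.congr fun L => ?_)
  rw [tValue1_two]
  simp only [mul_sum]
  simp only [← sum_sub_distrib, ← sum_add_distrib, mul_sum]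
  refine sum_congr rfl fun i _ => ?_
  have hQ : ∑ k ∈ range i, 2 * (4 / ((2 * (i : ℝ)) ^ (v + 2) * (2 * (k : ℝ) + 1) ^ 2))
      = 8 * (1 / (2 * (i : ℝ)) ^ (v + 2)) * oddHarmonicSq i := by
    rw [oddHarmonicSq, mul_sum]
    refine sum_congr rfl fun k _ => ?_
    simp only [div_eq_mul_inv, mul_inv]
    ring
  rw [hQ]
  ring
end

section
/- For every integer w ≥ 4, ∑_{a+b+c=w, a≥2, b,c≥1} ζ(a,b,c) = ζ(w), i.e., the sum of all admissible multiple zeta values of weight w and depth 3 equals ζ(w). -/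
open Filter

open scoped ENNReal Topology

/-! ### Rearrangement of sums in `ℝ≥0∞` -/

theorem ENNReal.tsum_sum_range_eq (f : ℕ → ℕ → ℝ≥0∞) :
    ∑' p, ∑ q ∈ Finset.range p, f p q = ∑' q, ∑' j, f (q + 1 + j) q := by
  have h1 : ∀ p, ∑ q ∈ Finset.range p, f p q = ∑' q, if q < p then f p q else 0 := by
    intro p
    rw [tsum_eq_sum (s := Finset.range p)]
    · exact Finset.sum_congr rfl fun q hq => by simp [Finset.mem_range.1 hq]
    · intro q hq
      exact if_neg (by simpa using hq)
  simp_rw [h1]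
  rw [ENNReal.tsum_comm]
  refine tsum_congr fun q => ?_
  rw [← (add_right_injective (q + 1)).tsum_eq]
  · exact tsum_congr fun j => if_pos (by omega)
  · intro p hp
    have : q < p := by
      by_contra h
      simp [h] at hp
    exact ⟨p - (q + 1), by simp; omega⟩

theorem ENNReal.tsum_tsum_eq_tsum_sum_range (g : ℕ → ℕ → ℝ≥0∞) :
    ∑' a, ∑' b, g a b = ∑' n, ∑ a ∈ Finset.range (n + 1), g a (n - a) := by
  have h := ENNReal.tsum_sum_range_eq fun p q => g q (p - 1 - q)
  rw [tsum_eq_zero_add' ENNReal.summable] at h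
  simp only [Finset.range_zero, Finset.sum_empty, zero_add, Nat.add_sub_cancel] at h
  rw [h]
  exact tsum_congr fun a => tsum_congr fun b => by congr; omega

theorem ENNReal.tsum_sum_range_sum_range_eq (f : ℕ → ℕ → ℕ → ℝ≥0∞) :
    ∑' p, ∑ q ∈ Finset.range p, ∑ s ∈ Finset.range q, f p q s =
      ∑' s, ∑' j, ∑' i, f (s + 1 + j + 1 + i) (s + 1 + j) s := by
  rw [ENNReal.tsum_sum_range_eq fun p q => ∑ s ∈ Finset.range q, f p q s]
  simp_rw [Summable.tsum_finsetSum fun _ _ => ENNReal.summable]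
  rw [ENNReal.tsum_sum_range_eq fun q s => ∑' i, f (q + 1 + i) q s]

/-! ### Uniqueness of power series coefficients in `ℝ≥0∞` -/

theorem ENNReal.tsum_mul_pow_eq_add (A : ℕ → ℝ≥0∞) (X : ℝ≥0∞) :
    ∑' n, A n * X ^ n = A 0 + X * ∑' n, A (n + 1) * X ^ n := by
  rw [tsum_eq_zero_add' ENNReal.summable, ← ENNReal.tsum_mul_left]
  simp only [pow_zero, mul_one]
  congr 1
  exact tsum_congr fun n => by ring

theorem ENNReal.tsum_succ_mul_pow_ne_top {A : ℕ → ℝ≥0∞} {X : ℝ≥0∞} (hX : X ≠ 0)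
    (h : ∑' n, A n * X ^ n ≠ ∞) : ∑' n, A (n + 1) * X ^ n ≠ ∞ := by
  rw [ENNReal.tsum_mul_pow_eq_add] at h
  intro h'
  rw [h', ENNReal.mul_top hX] at h
  simp at h

theorem ENNReal.coeff_zero_le_of_tsum_mul_pow_eq {A B : ℕ → ℝ≥0∞}
    (h : ∀ x : ℝ, 0 < x → x < 1 →
      ∑' n, A n * ENNReal.ofReal x ^ n = ∑' n, B n * ENNReal.ofReal x ^ n)
    (hB : ∀ x : ℝ, 0 < x → x < 1 → ∑' n, B n * ENNReal.ofReal x ^ n ≠ ∞) : A 0 ≤ B 0 := by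
  set S := ∑' n, B (n + 1) * ENNReal.ofReal (1 / 2) ^ n with hS
  have hS' : S ≠ ∞ := ENNReal.tsum_succ_mul_pow_ne_top (by simp)
    (hB (1 / 2) (by norm_num) (by norm_num))
  have hlim : Tendsto (fun x : ℝ => B 0 + ENNReal.ofReal x * S) (𝓝[>] 0) (𝓝 (B 0)) := by
    have h1 : Tendsto (fun x : ℝ => ENNReal.ofReal x) (𝓝[>] 0) (𝓝 0) := by
      simpa using (ENNReal.continuous_ofReal.tendsto 0).mono_left nhdsWithin_le_nhds
    simpa using (ENNReal.Tendsto.mul_const h1 (Or.inr hS')).const_add (B 0)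
  refine ge_of_tendsto hlim ?_
  filter_upwards [Ioo_mem_nhdsGT (show (0 : ℝ) < 1 / 2 by norm_num)] with x hx
  calc A 0 ≤ A 0 + ENNReal.ofReal x * ∑' n, A (n + 1) * ENNReal.ofReal x ^ n := le_self_add
    _ = B 0 + ENNReal.ofReal x * ∑' n, B (n + 1) * ENNReal.ofReal x ^ n := by
      rw [← ENNReal.tsum_mul_pow_eq_add, ← ENNReal.tsum_mul_pow_eq_add,
        h x hx.1 (by linarith [hx.2])]
    _ ≤ B 0 + ENNReal.ofReal x * S := by
      gcongr
      rw [hS]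
      gcongr
      exact hx.2.le

theorem ENNReal.eq_of_tsum_mul_pow_eq (m : ℕ) {A B : ℕ → ℝ≥0∞}
    (h : ∀ x : ℝ, 0 < x → x < 1 →
      ∑' n, A n * ENNReal.ofReal x ^ n = ∑' n, B n * ENNReal.ofReal x ^ n)
    (hB : ∀ x : ℝ, 0 < x → x < 1 → ∑' n, B n * ENNReal.ofReal x ^ n ≠ ∞) : A m = B m := by
  induction m generalizing A B with
  | zero =>
    exact le_antisymm (ENNReal.coeff_zero_le_of_tsum_mul_pow_eq h hB)
      (ENNReal.coeff_zero_le_of_tsum_mul_pow_eq (fun x h0 h1 => (h x h0 h1).symm)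
        fun x h0 h1 => h x h0 h1 ▸ hB x h0 h1)
  | succ m ih =>
    have h00 : A 0 = B 0 := le_antisymm (ENNReal.coeff_zero_le_of_tsum_mul_pow_eq h hB)
      (ENNReal.coeff_zero_le_of_tsum_mul_pow_eq (fun x h0 h1 => (h x h0 h1).symm)
        fun x h0 h1 => h x h0 h1 ▸ hB x h0 h1)
    refine ih (A := fun n => A (n + 1)) (B := fun n => B (n + 1)) (fun x h0 h1 => ?_)
      fun x h0 h1 => ENNReal.tsum_succ_mul_pow_ne_top (by simpa using h0) (hB x h0 h1)
    have hx := h x h0 h1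
    have hfin := hB x h0 h1
    rw [ENNReal.tsum_mul_pow_eq_add, ENNReal.tsum_mul_pow_eq_add B, h00] at hx
    rw [ENNReal.tsum_mul_pow_eq_add] at hfin
    rw [ENNReal.add_right_inj (fun h' => hfin (by simp [h'])),
      ENNReal.mul_right_inj (by simpa using h0) ENNReal.ofReal_ne_top] at hx
    exact hx

/-! ### The connector -/

/-- The rising product `(1 - x)(2 - x)⋯(n - x)`. -/
noncomputable def shiftedFactorial (x : ℝ) (n : ℕ) : ℝ :=
  ∏ i ∈ Finset.range n, ((i : ℝ) + 1 - x)

/-- The connector `(1 - x)_n (1 - x)_m / (1 - x)_{n + m}` of Seki and Yamamoto. -/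
noncomputable def connector (x : ℝ) (n m : ℕ) : ℝ :=
  shiftedFactorial x n * shiftedFactorial x m / shiftedFactorial x (n + m)

/-- The extended nonnegative number `1 / (n + 1 - x)`. -/
noncomputable def shiftedRecip (x : ℝ) (n : ℕ) : ℝ≥0∞ :=
  ENNReal.ofReal ((n : ℝ) + 1 - x)⁻¹

theorem shiftedFactorial_pos {x : ℝ} (hx : x < 1) (n : ℕ) : 0 < shiftedFactorial x n :=
  Finset.prod_pos fun i _ => by
    have : (0 : ℝ) ≤ i := i.cast_nonneg
    linarith

theorem shiftedFactorial_succ (x : ℝ) (n : ℕ) :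
    shiftedFactorial x (n + 1) = shiftedFactorial x n * (n + 1 - x) :=
  Finset.prod_range_succ _ _

theorem connector_pos {x : ℝ} (hx : x < 1) (n m : ℕ) : 0 < connector x n m :=
  div_pos (mul_pos (shiftedFactorial_pos hx n) (shiftedFactorial_pos hx m))
    (shiftedFactorial_pos hx _)

theorem connector_comm (x : ℝ) (n m : ℕ) : connector x n m = connector x m n := by
  rw [connector, connector, mul_comm, add_comm]

theorem connector_zero_left {x : ℝ} (hx : x < 1) (m : ℕ) : connector x 0 m = 1 := by
  have := (shiftedFactorial_pos hx m).ne'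
  rw [connector, zero_add, mul_div_assoc, div_self this, mul_one]
  simp [shiftedFactorial]

theorem connector_succ_left (x : ℝ) (n m : ℕ) :
    connector x (n + 1) m = connector x n m * ((n + 1 - x) / (n + m + 1 - x)) := by
  rw [connector, connector, add_right_comm, shiftedFactorial_succ, shiftedFactorial_succ]
  push_cast
  rw [mul_right_comm, mul_div_mul_comm]

theorem connector_le_one {x : ℝ} (hx : x < 1) (n m : ℕ) : connector x n m ≤ 1 := by
  induction n with
  | zero => exact (connector_zero_left hx m).le
  | succ n ih =>
    rw [connector_succ_left]
    have hn : (0 : ℝ) ≤ n := n.cast_nonneg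
    have hm : (0 : ℝ) ≤ m := m.cast_nonneg
    refine mul_le_one₀ ih (div_nonneg (by linarith) (by linarith)) ?_
    exact div_le_one_of_le₀ (by linarith) (by linarith)

theorem tendsto_connector {x : ℝ} (hx : x < 1) (m : ℕ) :
    Tendsto (fun n => connector x n (m + 1)) atTop (𝓝 0) := by
  have hm : (0 : ℝ) ≤ m := m.cast_nonneg
  have hlim : Tendsto (fun n : ℕ => ((m : ℝ) + 1 - x) / (n + (m + 1 - x))) atTop (𝓝 0) :=
    (tendsto_natCast_atTop_atTop.atTop_add tendsto_const_nhds).const_div_atTop _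
  refine squeeze_zero (fun n => (connector_pos hx n _).le) (fun n => ?_) hlim
  have hn : (0 : ℝ) ≤ n := n.cast_nonneg
  rw [connector_comm, connector_succ_left, connector_comm]
  have h : ((m : ℝ) + 1 - x) / (m + n + 1 - x) = (m + 1 - x) / (n + (m + 1 - x)) := by ring_nf
  rw [h]
  exact mul_le_of_le_one_left (div_nonneg (by linarith) (by linarith)) (connector_le_one hx _ _)

theorem connector_succ_mul_inv {x : ℝ} (hx : x < 1) (n m : ℕ) :
    connector x (n + 1) (m + 1) * ((n : ℝ) + 1 - x)⁻¹ =
      (connector x n (m + 1) - connector x (n + 1) (m + 1)) * ((m : ℝ) + 1)⁻¹ := by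
  have hn : (0 : ℝ) ≤ n := n.cast_nonneg
  have hm : (0 : ℝ) ≤ m := m.cast_nonneg
  rw [connector_succ_left]
  have h1 : (n : ℝ) + 1 - x ≠ 0 := by linarith
  have h2 : (n : ℝ) + (m + 1) + 1 - x ≠ 0 := by linarith
  push_cast
  field_simp
  ring

theorem tsum_connector_mul_shiftedRecip {x : ℝ} (hx : x < 1) (a m : ℕ) :
    ∑' i, ENNReal.ofReal (connector x (a + i + 1) (m + 1)) * shiftedRecip x (a + i) =
      ENNReal.ofReal (connector x a (m + 1)) * shiftedRecip 0 m := by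
  have hnn : ∀ i : ℕ, 0 ≤ connector x (a + i + 1) (m + 1) * (((a + i : ℕ) : ℝ) + 1 - x)⁻¹ := by
    intro i
    have hn : (0 : ℝ) ≤ (a + i : ℕ) := Nat.cast_nonneg _
    exact mul_nonneg (connector_pos hx _ _).le (inv_nonneg.2 (by linarith))
  have hs : HasSum (fun i : ℕ => connector x (a + i + 1) (m + 1) * (((a + i : ℕ) : ℝ) + 1 - x)⁻¹)
      (connector x a (m + 1) * ((m : ℝ) + 1)⁻¹) := by
    rw [hasSum_iff_tendsto_nat_of_nonneg hnn]
    have hsum : ∀ N : ℕ, ∑ i ∈ Finset.range N,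
        connector x (a + i + 1) (m + 1) * (((a + i : ℕ) : ℝ) + 1 - x)⁻¹ =
        (connector x a (m + 1) - connector x (N + a) (m + 1)) * ((m : ℝ) + 1)⁻¹ := by
      intro N
      simp_rw [connector_succ_mul_inv hx]
      rw [← Finset.sum_mul]
      have := Finset.sum_range_sub' (fun i => connector x (a + i) (m + 1)) N
      simp only [add_zero, ← add_assoc] at this
      rw [this, add_comm N]
    simp_rw [hsum]
    have := ((tendsto_add_atTop_iff_nat a).2 (tendsto_connector hx m)).const_sub
      (connector x a (m + 1))
    simpa using this.mul_const ((m : ℝ) + 1)⁻¹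
  simp_rw [shiftedRecip, ← ENNReal.ofReal_mul (connector_pos hx _ _).le]
  rw [← ENNReal.ofReal_tsum_of_nonneg hnn hs.summable, hs.tsum_eq, sub_zero]

/-- Transporting the connector from `(n, 0)` to `(0, m)`. -/
theorem tsum_shiftedRecip_transport {x : ℝ} (hx : x < 1) :
    ∑' p, ∑ q ∈ Finset.range p, ∑ s ∈ Finset.range q,
      shiftedRecip 0 p * shiftedRecip x p * shiftedRecip x q * shiftedRecip x s =
    ∑' m, shiftedRecip x m * shiftedRecip 0 m ^ 3 := by
  have hr : ∀ p, shiftedRecip 0 p = ∑' m,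
      ENNReal.ofReal (connector x (p + 1) (m + 1)) * shiftedRecip x m := by
    intro p
    have h := tsum_connector_mul_shiftedRecip hx 0 p
    simp only [zero_add, connector_zero_left hx, ENNReal.ofReal_one, one_mul] at h
    rw [← h]
    exact tsum_congr fun m => by rw [connector_comm]
  have htr : ∀ a m, ∑' i, shiftedRecip x (a + i) *
      ENNReal.ofReal (connector x (a + i + 1) (m + 1)) =
      ENNReal.ofReal (connector x a (m + 1)) * shiftedRecip 0 m := fun a m => by
    rw [← tsum_connector_mul_shiftedRecip hx a m]
    exact tsum_congr fun i => mul_comm _ _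
  rw [ENNReal.tsum_sum_range_sum_range_eq fun p q s =>
    shiftedRecip 0 p * shiftedRecip x p * shiftedRecip x q * shiftedRecip x s]
  calc
    _ = ∑' s, ∑' j, ∑' i, ∑' m, shiftedRecip x m * (shiftedRecip x s *
        (shiftedRecip x (s + 1 + j) * (shiftedRecip x (s + 1 + j + 1 + i) *
          ENNReal.ofReal (connector x (s + 1 + j + 1 + i + 1) (m + 1))))) := by
      refine tsum_congr fun s => tsum_congr fun j => tsum_congr fun i => ?_
      rw [hr, mul_assoc, mul_assoc, ← ENNReal.tsum_mul_right]
      exact tsum_congr fun m => by ring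
    _ = ∑' m, ∑' s, ∑' j, ∑' i, shiftedRecip x m * (shiftedRecip x s *
        (shiftedRecip x (s + 1 + j) * (shiftedRecip x (s + 1 + j + 1 + i) *
          ENNReal.ofReal (connector x (s + 1 + j + 1 + i + 1) (m + 1))))) := by
      symm
      rw [ENNReal.tsum_comm]
      refine tsum_congr fun s => ?_
      rw [ENNReal.tsum_comm]
      refine tsum_congr fun j => ?_
      rw [ENNReal.tsum_comm]
    _ = _ := by
      refine tsum_congr fun m => ?_
      have h0 := htr 0 m
      simp only [zero_add, connector_zero_left hx, ENNReal.ofReal_one, one_mul] at h0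
      simp_rw [ENNReal.tsum_mul_left, htr, ← mul_assoc, ENNReal.tsum_mul_right, htr, ← mul_assoc,
        ENNReal.tsum_mul_right, h0]
      ring

/-! ### Expansion into power series -/

theorem shiftedRecip_eq_tsum {x : ℝ} (h0 : 0 < x) (h1 : x < 1) (n : ℕ) :
    shiftedRecip x n = ∑' e, ENNReal.ofReal x ^ e * shiftedRecip 0 n ^ (e + 1) := by
  have hn : (0 : ℝ) ≤ n := n.cast_nonneg
  have hq : x / ((n : ℝ) + 1) < 1 := (div_lt_one (by linarith)).2 (by linarith)
  have hs := (hasSum_geometric_of_lt_one (by positivity) hq).mul_left ((n : ℝ) + 1)⁻¹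
  have hval : ((n : ℝ) + 1)⁻¹ * (1 - x / ((n : ℝ) + 1))⁻¹ = ((n : ℝ) + 1 - x)⁻¹ := by
    rw [← mul_inv]
    congr 1
    field_simp
  rw [shiftedRecip, ← hval, ← hs.tsum_eq, ENNReal.ofReal_tsum_of_nonneg _ hs.summable]
  · refine tsum_congr fun e => ?_
    rw [shiftedRecip, sub_zero, ← ENNReal.ofReal_pow h0.le, ← ENNReal.ofReal_pow (by positivity),
      ← ENNReal.ofReal_mul (by positivity)]
    congr 1
    rw [div_eq_mul_inv, mul_pow]
    ring
  · intro e
    positivity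

/-- The multiple zeta value `ζ(a, b, c)` as an extended nonnegative number. -/
noncomputable def tripleZeta (a b c : ℕ) : ℝ≥0∞ :=
  ∑' p, ∑ q ∈ Finset.range p, ∑ s ∈ Finset.range q,
    shiftedRecip 0 p ^ a * shiftedRecip 0 q ^ b * shiftedRecip 0 s ^ c

theorem tripleZeta_eq_tsum_prod (a b c : ℕ) :
    tripleZeta a b c = ∑' t : ℕ × ℕ × ℕ, shiftedRecip 0 (t.1 + 1 + t.2.1 + 1 + t.2.2) ^ a *
      shiftedRecip 0 (t.1 + 1 + t.2.1) ^ b * shiftedRecip 0 t.1 ^ c := by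
  rw [tripleZeta, ENNReal.tsum_sum_range_sum_range_eq fun p q s =>
    shiftedRecip 0 p ^ a * shiftedRecip 0 q ^ b * shiftedRecip 0 s ^ c, ENNReal.tsum_prod']
  exact tsum_congr fun s => by rw [ENNReal.tsum_prod']

theorem ENNReal.tsum_mul_tsum_mul_tsum (f g h : ℕ → ℝ≥0∞) :
    (∑' i, f i) * (∑' j, g j) * (∑' k, h k) =
      ∑' e : ℕ × ℕ × ℕ, f e.1 * g e.2.1 * h e.2.2 := by
  rw [ENNReal.tsum_prod', mul_assoc, ← ENNReal.tsum_mul_right]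
  refine tsum_congr fun i => ?_
  rw [ENNReal.tsum_prod', ← ENNReal.tsum_mul_right, ← ENNReal.tsum_mul_left]
  refine tsum_congr fun j => ?_
  rw [← ENNReal.tsum_mul_left, ← ENNReal.tsum_mul_left]
  exact tsum_congr fun k => (mul_assoc _ _ _).symm

theorem tsum_shiftedRecip_eq_tsum_tripleZeta {x : ℝ} (h0 : 0 < x) (h1 : x < 1) :
    ∑' p, ∑ q ∈ Finset.range p, ∑ s ∈ Finset.range q,
      shiftedRecip 0 p * shiftedRecip x p * shiftedRecip x q * shiftedRecip x s =
    ∑' m, (∑ i ∈ Finset.range (m + 1), ∑ j ∈ Finset.range (m - i + 1),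
      tripleZeta (i + 2) (j + 1) (m - i - j + 1)) * ENNReal.ofReal x ^ m := by
  calc
    _ = ∑' t : ℕ × ℕ × ℕ, shiftedRecip 0 (t.1 + 1 + t.2.1 + 1 + t.2.2) *
        (shiftedRecip x (t.1 + 1 + t.2.1 + 1 + t.2.2) * shiftedRecip x (t.1 + 1 + t.2.1) *
          shiftedRecip x t.1) := by
      rw [ENNReal.tsum_sum_range_sum_range_eq fun p q s =>
        shiftedRecip 0 p * shiftedRecip x p * shiftedRecip x q * shiftedRecip x s,
        ENNReal.tsum_prod']
      refine tsum_congr fun s => ?_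
      rw [ENNReal.tsum_prod']
      exact tsum_congr fun j => tsum_congr fun i => by ring
    _ = ∑' t : ℕ × ℕ × ℕ, ∑' e : ℕ × ℕ × ℕ, ENNReal.ofReal x ^ (e.1 + e.2.1 + e.2.2) *
        (shiftedRecip 0 (t.1 + 1 + t.2.1 + 1 + t.2.2) ^ (e.1 + 2) *
          shiftedRecip 0 (t.1 + 1 + t.2.1) ^ (e.2.1 + 1) *
          shiftedRecip 0 t.1 ^ (e.2.2 + 1)) := by
      refine tsum_congr fun t => ?_
      rw [shiftedRecip_eq_tsum h0 h1, shiftedRecip_eq_tsum h0 h1, shiftedRecip_eq_tsum h0 h1,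
        ENNReal.tsum_mul_tsum_mul_tsum, ← ENNReal.tsum_mul_left]
      exact tsum_congr fun e => by ring
    _ = ∑' i, ∑' j, ∑' k, ENNReal.ofReal x ^ (i + j + k) *
        tripleZeta (i + 2) (j + 1) (k + 1) := by
      rw [ENNReal.tsum_comm]
      simp_rw [ENNReal.tsum_mul_left, ← tripleZeta_eq_tsum_prod]
      rw [ENNReal.tsum_prod']
      exact tsum_congr fun i => by rw [ENNReal.tsum_prod']
    _ = ∑' i, ∑' n, ∑ j ∈ Finset.range (n + 1), ENNReal.ofReal x ^ (i + j + (n - j)) *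
        tripleZeta (i + 2) (j + 1) (n - j + 1) :=
      tsum_congr fun i => ENNReal.tsum_tsum_eq_tsum_sum_range _
    _ = _ := by
      rw [ENNReal.tsum_tsum_eq_tsum_sum_range]
      refine tsum_congr fun m => ?_
      simp_rw [Finset.sum_mul]
      refine Finset.sum_congr rfl fun i hi => Finset.sum_congr rfl fun j hj => ?_
      rw [Finset.mem_range] at hi hj
      rw [show i + j + (m - i - j) = m by omega, mul_comm]

theorem tsum_shiftedRecip_mul_pow_three {x : ℝ} (h0 : 0 < x) (h1 : x < 1) :
    ∑' n, shiftedRecip x n * shiftedRecip 0 n ^ 3 =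
      ∑' m, (∑' n, shiftedRecip 0 n ^ (m + 4)) * ENNReal.ofReal x ^ m := by
  simp_rw [shiftedRecip_eq_tsum h0 h1, ← ENNReal.tsum_mul_right]
  rw [ENNReal.tsum_comm]
  exact tsum_congr fun m => tsum_congr fun n => by ring

theorem tsum_shiftedRecip_mul_pow_three_ne_top {x : ℝ} (hx : x < 1) :
    ∑' n, shiftedRecip x n * shiftedRecip 0 n ^ 3 ≠ ∞ := by
  have hs : Summable fun n : ℕ => (1 - x)⁻¹ * ((n : ℝ) + 1 - 0)⁻¹ ^ 3 := by
    refine Summable.mul_left _ ?_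
    have := (summable_nat_add_iff 1).2 (Real.summable_nat_pow_inv.2 (show 1 < 3 by norm_num))
    simpa using this
  have hx' : 0 < 1 - x := by linarith
  refine ne_top_of_le_ne_top hs.tsum_ofReal_ne_top (ENNReal.tsum_le_tsum fun n => ?_)
  have hn : (0 : ℝ) ≤ n := n.cast_nonneg
  rw [ENNReal.ofReal_mul (by positivity), shiftedRecip, shiftedRecip,
    ENNReal.ofReal_pow (inv_nonneg.2 (by linarith))]
  gcongr
  linarith

theorem sum_tripleZeta (m : ℕ) :
    ∑ i ∈ Finset.range (m + 1), ∑ j ∈ Finset.range (m - i + 1),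
      tripleZeta (i + 2) (j + 1) (m - i - j + 1) = ∑' n, shiftedRecip 0 n ^ (m + 4) := by
  refine ENNReal.eq_of_tsum_mul_pow_eq m
    (A := fun m => ∑ i ∈ Finset.range (m + 1), ∑ j ∈ Finset.range (m - i + 1),
      tripleZeta (i + 2) (j + 1) (m - i - j + 1))
    (B := fun m => ∑' n, shiftedRecip 0 n ^ (m + 4)) (fun x h0 h1 => ?_) fun x h0 h1 => ?_
  · rw [← tsum_shiftedRecip_eq_tsum_tripleZeta h0 h1, ← tsum_shiftedRecip_mul_pow_three h0 h1,
      tsum_shiftedRecip_transport h1]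
  · rw [← tsum_shiftedRecip_mul_pow_three h0 h1]
    exact tsum_shiftedRecip_mul_pow_three_ne_top h1

theorem tsum_shiftedRecip_pow_ne_top (m : ℕ) : ∑' n, shiftedRecip 0 n ^ (m + 4) ≠ ∞ := by
  have hs : Summable fun n : ℕ => ((n : ℝ) + 1 - 0)⁻¹ ^ (m + 4) := by
    have := (summable_nat_add_iff 1).2 (Real.summable_nat_pow_inv.2 (show 1 < m + 4 by omega))
    simpa using this
  convert hs.tsum_ofReal_ne_top using 4 with n
  rw [shiftedRecip, ENNReal.ofReal_pow (by rw [sub_zero]; positivity)]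

/-! ### Comparison with limits of partial sums -/

theorem limUnder_sum_Icc_eq_toReal_tsum {f : ℕ → ℝ} {g : ℕ → ℝ≥0∞}
    (hfg : ∀ n, f (n + 1) = (g n).toReal) (hg : ∑' n, g n ≠ ∞) :
    limUnder atTop (fun N : ℕ => ∑ n ∈ Finset.Icc 1 N, f n) = (∑' n, g n).toReal := by
  refine Tendsto.limUnder_eq ?_
  refine ((ENNReal.tendsto_toReal hg).comp (ENNReal.tendsto_nat_tsum g)).congr fun N => ?_
  rw [Function.comp_apply, ENNReal.toReal_sum fun n _ => ENNReal.ne_top_of_tsum_ne_top hg n,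
    ← Finset.Ico_add_one_right_eq_Icc, Finset.sum_Ico_eq_sum_range]
  exact Finset.sum_congr rfl fun n _ => by rw [add_comm 1 n, hfg]

theorem toReal_shiftedRecip_zero (n : ℕ) :
    (shiftedRecip 0 n).toReal = (((n + 1 : ℕ) : ℝ))⁻¹ := by
  rw [shiftedRecip, ENNReal.toReal_ofReal (by rw [sub_zero]; positivity), sub_zero, Nat.cast_succ]

theorem shiftedRecip_ne_top (x : ℝ) (n : ℕ) : shiftedRecip x n ≠ ∞ :=
  ENNReal.ofReal_ne_top

theorem eulerSum1_one_eq (m : ℕ) :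
    eulerSum1 (m + 4) 1 = (∑' n, shiftedRecip 0 n ^ (m + 4)).toReal := by
  refine limUnder_sum_Icc_eq_toReal_tsum (fun n => ?_) (tsum_shiftedRecip_pow_ne_top m)
  rw [ENNReal.toReal_pow, toReal_shiftedRecip_zero, one_pow, one_div, inv_pow]

theorem eulerSum3_one_eq {a b c : ℕ} (h : tripleZeta a b c ≠ ∞) :
    eulerSum3 a b c 1 1 1 = (tripleZeta a b c).toReal := by
  refine limUnder_sum_Icc_eq_toReal_tsum (fun p => ?_) h
  have hfin : ∀ p q s : ℕ, shiftedRecip 0 p ^ a * shiftedRecip 0 q ^ b * shiftedRecip 0 s ^ c ≠ ∞ :=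
    fun p q s => ENNReal.mul_ne_top (ENNReal.mul_ne_top
      (ENNReal.pow_ne_top (shiftedRecip_ne_top _ _)) (ENNReal.pow_ne_top (shiftedRecip_ne_top _ _)))
      (ENNReal.pow_ne_top (shiftedRecip_ne_top _ _))
  rw [ENNReal.toReal_sum fun q _ => ENNReal.sum_ne_top.2 fun s _ => hfin p q s,
    Finset.sum_Ico_eq_sum_range]
  refine Finset.sum_congr rfl fun q _ => ?_
  rw [ENNReal.toReal_sum fun s _ => hfin p q s, Finset.sum_Ico_eq_sum_range, Nat.add_sub_cancel_left]
  refine Finset.sum_congr rfl fun s _ => ?_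
  simp only [ENNReal.toReal_mul, ENNReal.toReal_pow, toReal_shiftedRecip_zero, one_pow, one_mul,
    one_div, mul_inv, inv_pow, add_comm 1]

/-- Sum formula for depth-3 MZVs: for `w ≥ 4`, `∑_{a+b+c=w, a≥2} ζ(a,b,c) = ζ(w)`. -/
theorem sum_triple_zeta (w : ℕ) (hw : 4 ≤ w) :
    ∑ a ∈ Finset.Icc 2 (w - 2), ∑ b ∈ Finset.Icc 1 (w - a - 1),
        eulerSum3 a b (w - a - b) 1 1 1
      = eulerSum1 w 1 := by
  obtain ⟨m, rfl⟩ : ∃ m, w = m + 4 := ⟨w - 4, by omega⟩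
  have hsum := sum_tripleZeta m
  have htop := tsum_shiftedRecip_pow_ne_top m
  rw [← hsum] at htop
  have hinner := ENNReal.sum_ne_top.1 htop
  rw [eulerSum1_one_eq, ← hsum, ENNReal.toReal_sum hinner, ← Finset.Ico_add_one_right_eq_Icc,
    Finset.sum_Ico_eq_sum_range, show m + 4 - 2 + 1 - 2 = m + 1 by omega]
  refine Finset.sum_congr rfl fun i hi => ?_
  have hfin := ENNReal.sum_ne_top.1 (hinner i hi)
  rw [Finset.mem_range] at hi
  rw [ENNReal.toReal_sum hfin, ← Finset.Ico_add_one_right_eq_Icc, Finset.sum_Ico_eq_sum_range,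
    show m + 4 - (2 + i) - 1 + 1 - 1 = m - i + 1 by omega]
  refine Finset.sum_congr rfl fun j hj => ?_
  rw [← eulerSum3_one_eq (hfin j hj)]
  rw [Finset.mem_range] at hj
  rw [add_comm 2 i, add_comm 1 j, show m + 4 - (i + 2) - (j + 1) = m - i - j + 1 by omega]
end

section
/- For every integer w ≥ 4, with u = w−2 and v = w−1, ∑_{a+b+c=w, a≥2, b,c≥1} ζ(ā,b̄,c) = ζ(1̄,1,u) − ζ(1̄,1,ū) + ζ(1̄,v) − ζ(1̄,v̄) + ζ(2̄,u) − ζ(2̄,ū) + ζ(w̄). -/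
open Filter

open Topology

/-- The strict partial sum `∑_{1 ≤ i < n} 1 / i` of the harmonic series. -/
noncomputable def harm (n : ℕ) : ℝ := ∑ i ∈ Finset.Ico 1 n, 1 / (i : ℝ)

/-- The strict partial sum `∑_{1 ≤ i < n} (-1)ⁱ / i` of the alternating harmonic series. -/
noncomputable def altHarm (n : ℕ) : ℝ := ∑ i ∈ Finset.Ico 1 n, (-1 : ℝ) ^ i / i

/-- The nested sum `∑_{1 ≤ p < q < n} (-1)ᵖ / (p q)`. -/
noncomputable def altHarmSum (n : ℕ) : ℝ := ∑ q ∈ Finset.Ico 1 n, altHarm q / q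

lemma harm_one : harm 1 = 0 := by simp [harm]

lemma altHarm_one : altHarm 1 = 0 := by simp [altHarm]

lemma harm_succ {n : ℕ} (hn : 1 ≤ n) : harm (n + 1) = harm n + 1 / n := by
  simp [harm, Finset.sum_Ico_succ_top hn]

lemma altHarm_succ {n : ℕ} (hn : 1 ≤ n) : altHarm (n + 1) = altHarm n + (-1 : ℝ) ^ n / n := by
  simp [altHarm, Finset.sum_Ico_succ_top hn]

lemma altHarmSum_succ {n : ℕ} (hn : 1 ≤ n) :
    altHarmSum (n + 1) = altHarmSum n + altHarm n / n := by
  simp [altHarmSum, Finset.sum_Ico_succ_top hn]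

lemma neg_one_pow_mul_self (n : ℕ) : (-1 : ℝ) ^ n * (-1 : ℝ) ^ n = 1 := by
  rw [← mul_pow]; simp

lemma harm_nonneg (n : ℕ) : 0 ≤ harm n := Finset.sum_nonneg fun _ _ => by positivity

lemma harm_mono : Monotone harm := fun m n h =>
  Finset.sum_le_sum_of_subset_of_nonneg (Finset.Ico_subset_Ico_right h) fun _ _ _ => by positivity

lemma one_le_harm_succ {n : ℕ} (hn : 1 ≤ n) : 1 ≤ harm (n + 1) := by
  have h := harm_mono (show 2 ≤ n + 1 by omega)
  have h2 : harm 2 = 1 := by simp [harm]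
  linarith

/-- Partial sums of the alternating harmonic series, with the sign of their first term removed,
lie between zero and the absolute value of that term. -/
lemma altHarm_sub_mem_Icc (d : ℕ) : ∀ {a : ℕ}, 1 ≤ a →
    (-1 : ℝ) ^ a * (altHarm (a + d) - altHarm a) ∈ Set.Icc 0 (1 / (a : ℝ)) := by
  induction d with
  | zero => intro a ha; simp
  | succ d ih =>
    intro a ha
    have h := ih (show 1 ≤ a + 1 by omega)
    have e : (-1 : ℝ) ^ a * (altHarm (a + (d + 1)) - altHarm a)
        = 1 / a - (-1 : ℝ) ^ (a + 1) * (altHarm (a + 1 + d) - altHarm (a + 1)) := by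
      rw [show a + (d + 1) = a + 1 + d by ring, altHarm_succ ha, pow_succ]
      linear_combination (1 / (a : ℝ)) * neg_one_pow_mul_self a
    have ha' : (0 : ℝ) < a := by exact_mod_cast ha
    have hle : 1 / ((a + 1 : ℕ) : ℝ) ≤ 1 / (a : ℝ) := by
      apply one_div_le_one_div_of_le ha'; push_cast; linarith
    rw [e]
    exact ⟨by linarith [h.2], by linarith [h.1]⟩

lemma abs_altHarm_sub_le {a b : ℕ} (ha : 1 ≤ a) (hab : a ≤ b) :
    |altHarm b - altHarm a| ≤ 1 / (a : ℝ) := by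
  obtain ⟨d, rfl⟩ := Nat.exists_eq_add_of_le hab
  have h := altHarm_sub_mem_Icc d ha
  rw [← abs_of_nonneg h.1, abs_mul, abs_pow, abs_neg, abs_one, one_pow, one_mul] at h
  exact h.2

lemma abs_altHarm_le (n : ℕ) : |altHarm n| ≤ 1 := by
  rcases Nat.eq_zero_or_pos n with rfl | hn
  · simp [altHarm]
  · simpa [altHarm_one] using abs_altHarm_sub_le le_rfl hn

lemma exists_tendsto_altHarm : ∃ r : ℝ, Tendsto altHarm atTop (𝓝 r) := by
  refine cauchySeq_tendsto_of_complete (cauchySeq_of_le_tendsto_0'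
    (fun n : ℕ => 1 / (n : ℝ) + if n = 0 then 1 else 0) ?_ ?_)
  · intro n m hnm
    rw [Real.dist_eq, abs_sub_comm]
    rcases Nat.eq_zero_or_pos n with rfl | hn
    · simpa [altHarm] using abs_altHarm_le m
    · simpa [hn.ne'] using abs_altHarm_sub_le hn hnm
  · have h := tendsto_one_div_atTop_nhds_zero_nat (𝕜 := ℝ)
    refine h.congr' ?_
    filter_upwards [eventually_ge_atTop 1] with n hn
    simp [show n ≠ 0 by omega]

lemma abs_altHarmSum_le (n : ℕ) : |altHarmSum n| ≤ harm n := by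
  refine (Finset.abs_sum_le_sum_abs _ _).trans (Finset.sum_le_sum fun q _ => ?_)
  rw [abs_div, Nat.abs_cast]
  exact div_le_div_of_nonneg_right (abs_altHarm_le q) (by positivity)

/-- Summation by parts for `∑ (-1)ʲ (1 + ⋯ + 1/j) / j`. -/
lemma sum_neg_one_pow_mul_harm (n : ℕ) (hn : 1 ≤ n) :
    ∑ j ∈ Finset.Ico 1 n, (-1 : ℝ) ^ j * harm (j + 1) / j
      = harm n * altHarm n - altHarmSum n := by
  induction n, hn using Nat.le_induction with
  | base => simp [harm_one, altHarmSum]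
  | succ n hn ih =>
    rw [Finset.sum_Ico_succ_top hn, ih, harm_succ hn, altHarm_succ hn, altHarmSum_succ hn]
    ring

/-- Tannery's theorem for sums over `1 ≤ n ≤ N`. -/
lemma tendsto_sum_Icc_of_dominated {f : ℕ → ℕ → ℝ} {g bound : ℕ → ℝ} (hb : Summable bound)
    (hf : ∀ n, 1 ≤ n → Tendsto (fun N => f N n) atTop (𝓝 (g n)))
    (hle : ∀ N n, 1 ≤ n → n ≤ N → |f N n| ≤ bound n) :
    Tendsto (fun N => ∑ n ∈ Finset.Icc 1 N, f N n) atTop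
      (𝓝 (∑' n, if 1 ≤ n then g n else 0)) := by
  have key := tendsto_tsum_of_dominated_convergence
    (f := fun N n => if n ∈ Finset.Icc 1 N then f N n else 0)
    (g := fun n => if 1 ≤ n then g n else 0) (𝓕 := atTop) hb.abs ?_ ?_
  · refine key.congr fun N => ?_
    rw [tsum_eq_sum (s := Finset.Icc 1 N) (fun n hn => by simp [hn])]
    exact Finset.sum_congr rfl fun n hn => by simp [hn]
  · intro n
    by_cases hn : 1 ≤ n
    · simp only [hn, if_true]
      refine (hf n hn).congr' ?_
      filter_upwards [eventually_ge_atTop n] with N hN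
      simp [hn, hN]
    · simp [hn]
  · refine Eventually.of_forall fun N n => ?_
    by_cases hn : n ∈ Finset.Icc 1 N
    · have h := Finset.mem_Icc.mp hn
      simp only [hn, if_true, Real.norm_eq_abs]
      exact (hle N n h.1 h.2).trans (le_abs_self _)
    · simp only [hn, if_false, norm_zero]; positivity

lemma harm_succ_eq_harmonic (n : ℕ) : harm (n + 1) = (harmonic n : ℝ) := by
  simp [harm, harmonic_eq_sum_Icc, Finset.Ico_add_one_right_eq_Icc]

lemma summable_harm_sq_div : Summable fun n : ℕ => harm (n + 1) ^ 2 / (n : ℝ) ^ 2 := by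
  have h := (Real.summable_nat_rpow (p := -(3 / 2 : ℝ))).2 (by norm_num)
  refine Summable.of_nonneg_of_le (fun n => by positivity) (fun n => ?_) (h.mul_left 25)
  rcases Nat.eq_zero_or_pos n with rfl | hn
  · simp
  have hn' : (1 : ℝ) ≤ n := by exact_mod_cast hn
  have h0 : (0 : ℝ) < n := by linarith
  have h1 : harm (n + 1) ≤ 5 * (n : ℝ) ^ (1 / 4 : ℝ) := by
    rw [harm_succ_eq_harmonic]
    have h2 := harmonic_le_one_add_log n
    have h3 := Real.log_le_rpow_div h0.le (show (0 : ℝ) < 1 / 4 by norm_num)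
    have h4 := Real.one_le_rpow hn' (show (0 : ℝ) ≤ 1 / 4 by norm_num)
    linarith
  have h5 : harm (n + 1) ^ 2 ≤ 25 * (n : ℝ) ^ (1 / 2 : ℝ) := by
    have := pow_le_pow_left₀ (harm_nonneg _) h1 2
    rwa [mul_pow, ← Real.rpow_natCast ((n : ℝ) ^ _), ← Real.rpow_mul h0.le,
      show (1 / 4 : ℝ) * (2 : ℕ) = 1 / 2 by norm_num, show (5 : ℝ) ^ 2 = 25 by norm_num] at this
  calc _ ≤ 25 * (n : ℝ) ^ (1 / 2 : ℝ) / (n : ℝ) ^ 2 := by gcongr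
    _ = _ := by
      rw [mul_div_assoc, ← Real.rpow_natCast (n : ℝ) 2, ← Real.rpow_sub h0]; norm_num

lemma hasSum_one_div_sub_one_div_add (m : ℕ) :
    HasSum (fun l : ℕ => 1 / ((l + 1 : ℕ) : ℝ) - 1 / ((l + 1 : ℕ) + m : ℝ)) (harm (m + 1)) := by
  induction m with
  | zero => simp [harm_one, hasSum_zero]
  | succ m ih =>
    rw [harm_succ (by omega)]
    have h : HasSum (fun l : ℕ => 1 / ((l + 1 : ℕ) + m : ℝ) - 1 / ((l + 1 : ℕ) + (m + 1 : ℕ) : ℝ))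
        (1 / ((m + 1 : ℕ) : ℝ)) := by
      rw [hasSum_iff_tendsto_nat_of_nonneg]
      · have e : ∀ K : ℕ, ∑ l ∈ Finset.range K,
            (1 / ((l + 1 : ℕ) + m : ℝ) - 1 / ((l + 1 : ℕ) + (m + 1 : ℕ) : ℝ))
              = 1 / ((m + 1 : ℕ) : ℝ) - 1 / ((K + (m + 1) : ℕ) : ℝ) := by
          intro K
          induction K with
          | zero => simp
          | succ K ihK => rw [Finset.sum_range_succ, ihK]; push_cast; ring
        simp only [e]
        have ht : Tendsto (fun K : ℕ => 1 / ((K + (m + 1) : ℕ) : ℝ)) atTop (𝓝 0) :=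
          (tendsto_one_div_atTop_nhds_zero_nat (𝕜 := ℝ)).comp (tendsto_add_atTop_nat (m + 1))
        simpa using ht.const_sub (1 / ((m + 1 : ℕ) : ℝ))
      · intro l
        rw [sub_nonneg]
        apply one_div_le_one_div_of_le (by positivity); push_cast; linarith
    refine (ih.add h).congr_fun ?_
    intro l; ring

lemma hasSum_one_div_mul_add {m : ℕ} (hm : 1 ≤ m) :
    HasSum (fun l : ℕ => 1 / ((l : ℝ) * (l + m))) (harm (m + 1) / m) := by
  have hm' : (m : ℝ) ≠ 0 := by positivity
  have h := (hasSum_one_div_sub_one_div_add m).div_const (m : ℝ)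
  have h2 : HasSum (fun l : ℕ => 1 / (((l + 1 : ℕ) : ℝ) * ((l + 1 : ℕ) + m))) (harm (m + 1) / m) := by
    refine h.congr_fun fun l => ?_
    have h1 : ((l + 1 : ℕ) : ℝ) ≠ 0 := by positivity
    have h3 : ((l + 1 : ℕ) : ℝ) + m ≠ 0 := by positivity
    field_simp
    ring
  simpa using (hasSum_nat_add_iff (f := fun l : ℕ => 1 / ((l : ℝ) * (l + m))) 1).1 h2

lemma tendsto_sum_one_div_mul_add {m : ℕ} (hm : 1 ≤ m) :
    Tendsto (fun K : ℕ => ∑ l ∈ Finset.Ico 1 K, 1 / ((l : ℝ) * (l + m))) atTop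
      (𝓝 (harm (m + 1) / m)) := by
  refine (hasSum_one_div_mul_add hm).tendsto_sum_nat.congr' ?_
  filter_upwards [eventually_ge_atTop 1] with K hK
  rw [Finset.range_eq_Ico, Finset.sum_eq_sum_Ico_succ_bot (by omega)]
  simp

lemma sum_one_div_mul_add_le {m : ℕ} (hm : 1 ≤ m) (K : ℕ) :
    ∑ l ∈ Finset.Ico 1 K, 1 / ((l : ℝ) * (l + m)) ≤ harm (m + 1) / m :=
  sum_le_hasSum _ (fun _ _ => by positivity) (hasSum_one_div_mul_add hm)

lemma sum_neg_one_pow_div_add (n : ℕ) {K : ℕ} (hK : 1 ≤ K) :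
    ∑ m ∈ Finset.Ico 1 K, (-1 : ℝ) ^ m / (m + n)
      = (-1 : ℝ) ^ n * (altHarm (K + n) - altHarm (n + 1)) := by
  induction K, hK using Nat.le_induction with
  | base => simp [add_comm]
  | succ K hK ih =>
    rw [Finset.sum_Ico_succ_top hK, ih, show K + 1 + n = K + n + 1 by ring,
      altHarm_succ (n := K + n) (by omega), pow_add]
    push_cast
    linear_combination (-(-1 : ℝ) ^ K / (K + n)) * neg_one_pow_mul_self n

lemma sum_altHarm_eq_sum_tails (N : ℕ) :
    ∑ k ∈ Finset.Ico 1 (N + 1), (-1 : ℝ) ^ k * altHarm k / k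
      = ∑ l ∈ Finset.Icc 1 N, 1 / (l : ℝ) * ((-1 : ℝ) ^ l * (altHarm (N + 1) - altHarm (l + 1))) := by
  induction N with
  | zero => simp
  | succ N ih =>
    rw [Finset.sum_Ico_succ_top (by omega), ih, Finset.sum_Icc_succ_top (by omega),
      altHarm_succ (n := N + 1) (by omega)]
    have e : (-1 : ℝ) ^ (N + 1) * altHarm (N + 1) / ((N + 1 : ℕ) : ℝ)
        = ∑ l ∈ Finset.Icc 1 N,
            1 / (l : ℝ) * ((-1 : ℝ) ^ l * ((-1 : ℝ) ^ (N + 1) / ((N + 1 : ℕ) : ℝ))) := by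
      rw [altHarm, Finset.mul_sum, Finset.sum_div, Finset.Ico_add_one_right_eq_Icc]
      exact Finset.sum_congr rfl fun l _ => by ring
    rw [e, ← Finset.sum_add_distrib]
    simp only [sub_self, mul_zero, add_zero]
    exact Finset.sum_congr rfl fun l _ => by ring

/-- The series `∑ (-1)ᵏ (∑_{j < k} (-1)ʲ / j) / k` and `∑ (-1)ᵏ (∑_{j ≤ k} 1 / j) / k` converge to
the same value. -/
lemma exists_tendsto_sum_altHarm_sum_harm : ∃ c : ℝ,
    Tendsto (fun K : ℕ => ∑ k ∈ Finset.Ico 1 K, (-1 : ℝ) ^ k * altHarm k / k) atTop (𝓝 c) ∧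
    Tendsto (fun K : ℕ => ∑ k ∈ Finset.Ico 1 K, (-1 : ℝ) ^ k * harm (k + 1) / k) atTop (𝓝 c) := by
  obtain ⟨r, hr⟩ := exists_tendsto_altHarm
  have hs : Summable fun l : ℕ => 1 / ((l : ℝ) * (l + (1 : ℕ))) :=
    (hasSum_one_div_mul_add le_rfl).summable
  have hbound : ∀ l M : ℕ, l ≤ M →
      |1 / (l : ℝ) * ((-1 : ℝ) ^ l * (altHarm (M + 1) - altHarm (l + 1)))|
        ≤ 1 / ((l : ℝ) * (l + (1 : ℕ))) := by
    intro l M hM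
    have h := abs_altHarm_sub_le (show 1 ≤ l + 1 by omega) (show l + 1 ≤ M + 1 by omega)
    rw [abs_mul, abs_mul, abs_pow, abs_neg, abs_one, one_pow, one_mul,
      abs_of_nonneg (by positivity), ← one_div_mul_one_div]
    refine mul_le_mul_of_nonneg_left ?_ (by positivity)
    exact_mod_cast h
  refine ⟨∑' l : ℕ, 1 / (l : ℝ) * ((-1 : ℝ) ^ l * (r - altHarm (l + 1))), ?_, ?_⟩
  · rw [← tendsto_add_atTop_iff_nat 1]
    simp only [sum_altHarm_eq_sum_tails]
    have h := tendsto_sum_Icc_of_dominated hs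
      (f := fun N l => 1 / (l : ℝ) * ((-1 : ℝ) ^ l * (altHarm (N + 1) - altHarm (l + 1))))
      (g := fun l : ℕ => 1 / (l : ℝ) * ((-1 : ℝ) ^ l * (r - altHarm (l + 1))))
      (fun l _ => (((hr.comp (tendsto_add_atTop_nat 1)).sub_const _).const_mul _).const_mul _)
      (fun N l _ hN => hbound l N hN)
    convert h using 3
    ext l
    rcases Nat.eq_zero_or_pos l with rfl | hl
    · simp
    · simp [show 1 ≤ l from hl]
  · rw [← tendsto_add_atTop_iff_nat 1]
    have h := tendsto_tsum_of_dominated_convergence (𝓕 := atTop) hs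
      (f := fun N (l : ℕ) => 1 / (l : ℝ) * ((-1 : ℝ) ^ l * (altHarm (N + l + 1) - altHarm (l + 1))))
      (g := fun l : ℕ => 1 / (l : ℝ) * ((-1 : ℝ) ^ l * (r - altHarm (l + 1))))
      (fun l => (((hr.comp (tendsto_add_atTop_nat (l + 1))).sub_const _).const_mul _).const_mul _)
      (Eventually.of_forall fun N l => hbound l (N + l) (by omega))
    refine h.congr fun N => ?_
    have hsum := hasSum_sum (s := Finset.Ico 1 (N + 1)) fun m hm =>
      (hasSum_one_div_mul_add (Finset.mem_Ico.1 hm).1).mul_left ((-1 : ℝ) ^ m)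
    simp only [← mul_div_assoc] at hsum
    rw [← hsum.tsum_eq]
    refine tsum_congr fun l => ?_
    rw [show N + l + 1 = N + 1 + l by ring, ← sum_neg_one_pow_div_add l (by omega), Finset.mul_sum]
    refine Finset.sum_congr rfl fun m _ => ?_
    rw [mul_one, ← div_div, add_comm (l : ℝ), div_mul_div_comm, one_mul, div_div]

lemma sum_altHarm_div_shift (n : ℕ) {K : ℕ} (hK : 1 ≤ K) :
    ∑ k ∈ Finset.Ico 1 (K + 1), (-1 : ℝ) ^ k * altHarm k / (k + n)
      = -∑ k ∈ Finset.Ico 1 K, (-1 : ℝ) ^ k * altHarm k / (k + (n + 1 : ℕ))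
        - ∑ k ∈ Finset.Ico 1 K, 1 / ((k : ℝ) * (k + (n + 1 : ℕ))) := by
  induction K, hK using Nat.le_induction with
  | base => simp [altHarm_one]
  | succ K hK ih =>
    rw [Finset.sum_Ico_succ_top (by omega), ih, Finset.sum_Ico_succ_top hK,
      Finset.sum_Ico_succ_top hK, altHarm_succ hK, pow_succ]
    have h1 : (K : ℝ) ≠ 0 := by positivity
    have h2 : (K : ℝ) + (n + 1) ≠ 0 := by positivity
    have h3 : (K : ℝ) + 1 + n ≠ 0 := by positivity
    push_cast
    rw [show (K : ℝ) + 1 + n = K + (n + 1) by ring]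
    field_simp
    linear_combination -neg_one_pow_mul_self K

lemma tendsto_sum_altHarm_div_add {c : ℝ}
    (hc : Tendsto (fun K : ℕ => ∑ k ∈ Finset.Ico 1 K, (-1 : ℝ) ^ k * altHarm k / k) atTop (𝓝 c))
    (n : ℕ) :
    Tendsto (fun K : ℕ => ∑ k ∈ Finset.Ico 1 K, (-1 : ℝ) ^ k * altHarm k / (k + n)) atTop
      (𝓝 ((-1 : ℝ) ^ n * (c - (harm (n + 1) * altHarm (n + 1) - altHarmSum (n + 1))))) := by
  induction n with
  | zero => simpa [harm_one, altHarmSum] using hc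
  | succ n ih =>
    have h := ((ih.comp (tendsto_add_atTop_nat 1)).neg).sub
      (tendsto_sum_one_div_mul_add (show 1 ≤ n + 1 by omega))
    have e : (-1 : ℝ) ^ (n + 1) *
        (c - (harm (n + 1 + 1) * altHarm (n + 1 + 1) - altHarmSum (n + 1 + 1)))
        = -((-1 : ℝ) ^ n * (c - (harm (n + 1) * altHarm (n + 1) - altHarmSum (n + 1))))
          - harm (n + 1 + 1) / ((n + 1 : ℕ) : ℝ) := by
      rw [altHarm_succ (n := n + 1) (by omega), altHarmSum_succ (n := n + 1) (by omega),
        harm_succ (n := n + 1) (by omega), pow_succ]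
      linear_combination (-(harm (n + 1) + 1 / ((n + 1 : ℕ) : ℝ)) / ((n + 1 : ℕ) : ℝ))
        * neg_one_pow_mul_self n
    rw [e]
    refine h.congr' ?_
    filter_upwards [eventually_ge_atTop 1] with K hK
    simp only [Function.comp]
    rw [sum_altHarm_div_shift n hK]
    ring

/-- The coefficient of `1 / n ^ (w - 2)` in the truncation at `N` of the sum over all triples
`(a, b, c)`. -/
noncomputable def tripleKernel (N n : ℕ) : ℝ :=
  ∑ k ∈ Finset.Ico 1 (N + 1 - n), (1 / (k : ℝ) - 1 / (k + n)) * (-1 : ℝ) ^ k * (altHarm k - harm n)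
    + altHarmSum n

lemma tendsto_tripleKernel {c r : ℝ}
    (hc : Tendsto (fun K : ℕ => ∑ k ∈ Finset.Ico 1 K, (-1 : ℝ) ^ k * altHarm k / k) atTop (𝓝 c))
    (hr : Tendsto altHarm atTop (𝓝 r)) {n : ℕ} (hn : 1 ≤ n) :
    Tendsto (fun N => tripleKernel N n) atTop
      (𝓝 ((1 - (-1 : ℝ) ^ n) * (c - r * harm n + altHarmSum n) + 1 / (n : ℝ) ^ 2)) := by
  have hM := tendsto_sum_altHarm_div_add hc n
  have hR : Tendsto (fun K : ℕ => ∑ k ∈ Finset.Ico 1 K, (-1 : ℝ) ^ k / ((k : ℝ) + n)) atTop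
      (𝓝 ((-1 : ℝ) ^ n * (r - altHarm (n + 1)))) := by
    refine (((hr.comp (tendsto_add_atTop_nat n)).sub_const _).const_mul _).congr' ?_
    filter_upwards [eventually_ge_atTop 1] with K hK
    rw [sum_neg_one_pow_div_add n hK]; rfl
  have h := ((hc.sub hM).sub ((hr.sub hR).const_mul (harm n))).add_const (altHarmSum n)
  have ht : Tendsto (fun N => N + 1 - n) atTop atTop :=
    tendsto_atTop_atTop.2 fun b => ⟨b + n, fun a ha => by omega⟩
  have e : c - (-1 : ℝ) ^ n * (c - (harm (n + 1) * altHarm (n + 1) - altHarmSum (n + 1)))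
      - harm n * (r - (-1 : ℝ) ^ n * (r - altHarm (n + 1))) + altHarmSum n
      = (1 - (-1 : ℝ) ^ n) * (c - r * harm n + altHarmSum n) + 1 / (n : ℝ) ^ 2 := by
    rw [altHarm_succ hn, altHarmSum_succ hn, harm_succ hn]
    linear_combination (1 / (n : ℝ) ^ 2) * neg_one_pow_mul_self n
  rw [e] at h
  refine (h.comp ht).congr fun N => ?_
  simp only [Function.comp, tripleKernel, altHarm.eq_1 (N + 1 - n)]
  rw [← Finset.sum_sub_distrib, ← Finset.sum_sub_distrib, Finset.mul_sum, ← Finset.sum_sub_distrib]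
  congr 1
  exact Finset.sum_congr rfl fun k _ => by ring

lemma abs_tripleKernel_le (N : ℕ) {n : ℕ} (hn : 1 ≤ n) :
    |tripleKernel N n| ≤ 3 * harm (n + 1) ^ 2 := by
  have h1 := one_le_harm_succ hn
  have hn' : (0 : ℝ) < n := by exact_mod_cast hn
  have h2 : harm n ≤ harm (n + 1) := harm_mono (Nat.le_succ n)
  have h3 : |∑ k ∈ Finset.Ico 1 (N + 1 - n),
      (1 / (k : ℝ) - 1 / (k + n)) * (-1 : ℝ) ^ k * (altHarm k - harm n)|
      ≤ harm (n + 1) * (1 + harm n) := by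
    calc _ ≤ ∑ k ∈ Finset.Ico 1 (N + 1 - n), n * (1 / ((k : ℝ) * (k + n))) * (1 + harm n) := by
          refine (Finset.abs_sum_le_sum_abs _ _).trans (Finset.sum_le_sum fun k hk => ?_)
          have hk' : (0 : ℝ) < k := by exact_mod_cast (Finset.mem_Ico.1 hk).1
          have e : 1 / (k : ℝ) - 1 / (k + n) = n * (1 / ((k : ℝ) * (k + n))) := by
            field_simp; ring
          rw [e, abs_mul, abs_mul, abs_pow, abs_neg, abs_one, one_pow, mul_one,
            abs_of_nonneg (by positivity)]
          gcongr
          refine (abs_sub _ _).trans ?_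
          rw [abs_of_nonneg (harm_nonneg n)]
          linarith [abs_altHarm_le k]
      _ ≤ _ := by
          rw [← Finset.sum_mul, ← Finset.mul_sum]
          have := sum_one_div_mul_add_le hn (N + 1 - n)
          rw [le_div_iff₀ hn', mul_comm] at this
          have := harm_nonneg n
          gcongr
  have h4 := abs_altHarmSum_le n
  have h5 := harm_nonneg n
  refine (abs_add_le _ _).trans ((add_le_add h3 h4).trans ?_)
  nlinarith

/-- The tail `∑_{n < k ≤ N} (-1)ᵏ / kˢ`. -/
noncomputable def altTail (s N n : ℕ) : ℝ :=
  ∑ k ∈ Finset.Ico (n + 1) (N + 1), (-1 : ℝ) ^ k / (k : ℝ) ^ s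

/-- The tail `∑_{n < l < k ≤ N} (-1)ᵏ / (k l)`. -/
noncomputable def altDoubleTail (N n : ℕ) : ℝ :=
  ∑ l ∈ Finset.Ico (n + 1) (N + 1), 1 / (l : ℝ) * altTail 1 N l

lemma sum_Ico_succ_eq_sub (f : ℕ → ℝ) {n N : ℕ} (h : n ≤ N) :
    ∑ k ∈ Finset.Ico (n + 1) (N + 1), f k
      = ∑ k ∈ Finset.Ico 1 (N + 1), f k - ∑ k ∈ Finset.Ico 1 (n + 1), f k := by
  rw [← Finset.sum_Ico_consecutive f (show 1 ≤ n + 1 by omega) (show n + 1 ≤ N + 1 by omega)]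
  ring

lemma altTail_one {n N : ℕ} (h : n ≤ N) : altTail 1 N n = altHarm (N + 1) - altHarm (n + 1) := by
  simp only [altTail, pow_one]
  exact sum_Ico_succ_eq_sub _ h

lemma abs_altTail_one_le {n N : ℕ} (h : n ≤ N) : |altTail 1 N n| ≤ 1 / ((n + 1 : ℕ) : ℝ) := by
  rw [altTail_one h]
  exact abs_altHarm_sub_le (by omega) (by omega)

lemma tendsto_altTail_one {r : ℝ} (hr : Tendsto altHarm atTop (𝓝 r)) (n : ℕ) :
    Tendsto (fun N => altTail 1 N n) atTop (𝓝 (r - altHarm (n + 1))) := by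
  refine ((hr.comp (tendsto_add_atTop_nat 1)).sub_const _).congr' ?_
  filter_upwards [eventually_ge_atTop n] with N hN
  rw [altTail_one hN]; rfl

lemma summable_neg_one_pow_div_sq : Summable fun k : ℕ => (-1 : ℝ) ^ k / (k : ℝ) ^ 2 := by
  refine Summable.of_norm ?_
  simp

lemma exists_tendsto_altTail_two (n : ℕ) :
    ∃ t : ℝ, Tendsto (fun N => altTail 2 N n) atTop (𝓝 t) := by
  have h := (summable_neg_one_pow_div_sq.hasSum.tendsto_sum_nat.comp
    (tendsto_add_atTop_nat 1)).sub_const (∑ k ∈ Finset.range (n + 1), (-1 : ℝ) ^ k / (k : ℝ) ^ 2)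
  refine ⟨_, h.congr' ?_⟩
  filter_upwards [eventually_ge_atTop n] with N hN
  rw [altTail, Finset.sum_Ico_eq_sub _ (by omega)]; rfl

lemma exists_abs_altTail_two_le : ∃ C : ℝ, ∀ N n, |altTail 2 N n| ≤ C :=
  ⟨_, fun _ _ => (Finset.abs_sum_le_sum_abs _ _).trans
    (summable_neg_one_pow_div_sq.abs.sum_le_tsum _ fun _ _ => abs_nonneg _)⟩

lemma abs_altDoubleTail_le (N n : ℕ) : |altDoubleTail N n| ≤ 1 := by
  have h : ∑ l ∈ Finset.Ico 1 (N + 1), 1 / ((l : ℝ) * (l + (1 : ℕ))) ≤ 1 := by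
    simpa [harm] using sum_one_div_mul_add_le le_rfl (N + 1)
  refine le_trans ?_ h
  calc _ ≤ ∑ l ∈ Finset.Ico (n + 1) (N + 1), 1 / ((l : ℝ) * (l + (1 : ℕ))) := by
        refine (Finset.abs_sum_le_sum_abs _ _).trans (Finset.sum_le_sum fun l hl => ?_)
        have hl' := Finset.mem_Ico.1 hl
        rw [abs_mul, abs_of_nonneg (by positivity), ← one_div_mul_one_div]
        refine mul_le_mul_of_nonneg_left ?_ (by positivity)
        exact_mod_cast abs_altTail_one_le (show l ≤ N by omega)
    _ ≤ _ := Finset.sum_le_sum_of_subset_of_nonneg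
        (Finset.Ico_subset_Ico_left (by omega)) fun _ _ _ => by positivity

lemma altDoubleTail_add_altTail_two {n N : ℕ} (h : n ≤ N) :
    altDoubleTail N n + altTail 2 N n
      = ∑ k ∈ Finset.Ico 1 (N + 1), (-1 : ℝ) ^ k * harm (k + 1) / k
        - altHarm (N + 1) * harm (n + 1) + altHarmSum (n + 1) := by
  have e : altDoubleTail N n + altTail 2 N n
      = altHarm (N + 1) * ∑ l ∈ Finset.Ico (n + 1) (N + 1), 1 / (l : ℝ)
        - ∑ l ∈ Finset.Ico (n + 1) (N + 1), altHarm l / l := by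
    rw [altDoubleTail, altTail, ← Finset.sum_add_distrib, Finset.mul_sum, ← Finset.sum_sub_distrib]
    refine Finset.sum_congr rfl fun l hl => ?_
    have hl' := Finset.mem_Ico.1 hl
    rw [altTail_one (by omega), altHarm_succ (n := l) (by omega)]
    ring
  rw [e, sum_Ico_succ_eq_sub _ h, sum_Ico_succ_eq_sub _ h, sum_neg_one_pow_mul_harm _ (by omega)]
  simp only [harm, altHarmSum]
  ring

lemma tendsto_altDoubleTail_add_altTail_two {c r : ℝ}
    (hc : Tendsto (fun K : ℕ => ∑ k ∈ Finset.Ico 1 K, (-1 : ℝ) ^ k * harm (k + 1) / k) atTop (𝓝 c))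
    (hr : Tendsto altHarm atTop (𝓝 r)) (n : ℕ) :
    Tendsto (fun N => altDoubleTail N n + altTail 2 N n) atTop
      (𝓝 (c - r * harm (n + 1) + altHarmSum (n + 1))) := by
  refine (((hc.comp (tendsto_add_atTop_nat 1)).sub
    ((hr.comp (tendsto_add_atTop_nat 1)).mul_const (harm (n + 1)))).add_const
      (altHarmSum (n + 1))).congr' ?_
  filter_upwards [eventually_ge_atTop n] with N hN
  rw [altDoubleTail_add_altTail_two hN]; rfl

lemma exists_tendsto_altDoubleTail (n : ℕ) :
    ∃ t : ℝ, Tendsto (fun N => altDoubleTail N n) atTop (𝓝 t) := by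
  obtain ⟨r, hr⟩ := exists_tendsto_altHarm
  obtain ⟨c, -, hc⟩ := exists_tendsto_sum_altHarm_sum_harm
  obtain ⟨t, ht⟩ := exists_tendsto_altTail_two n
  exact ⟨_, ((tendsto_altDoubleTail_add_altTail_two hc hr n).sub ht).congr fun N => by ring⟩

lemma summable_const_div_pow (C : ℝ) {u : ℕ} (hu : 2 ≤ u) :
    Summable fun n : ℕ => C * (1 / (n : ℝ) ^ u) :=
  ((Real.summable_one_div_nat_pow (p := u)).2 (by omega)).mul_left C

/-- Convergence of the weighted sums `∑_{n ≤ N} eⁿ / nᵘ · E N n` with bounded convergent `E`. -/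
lemma exists_tendsto_sum_mul_of_bounded {E : ℕ → ℕ → ℝ} {C e : ℝ} {u : ℕ} (hu : 2 ≤ u)
    (he : |e| = 1) (hE : ∀ n, ∃ t : ℝ, Tendsto (fun N => E N n) atTop (𝓝 t))
    (hC : ∀ N n, n ≤ N → |E N n| ≤ C) :
    ∃ t : ℝ, Tendsto (fun N : ℕ => ∑ n ∈ Finset.Icc 1 N, e ^ n / (n : ℝ) ^ u * E N n) atTop (𝓝 t) := by
  choose t ht using hE
  refine ⟨_, tendsto_sum_Icc_of_dominated (summable_const_div_pow C hu)
    (fun n _ => (ht n).const_mul _) fun N n _ hn => ?_⟩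
  rw [abs_mul, abs_div, abs_pow, he, one_pow, abs_of_nonneg (by positivity), mul_comm]
  exact mul_le_mul_of_nonneg_right (hC N n hn) (by positivity)

lemma sum_Ico_triangle_comm (a M : ℕ) (g : ℕ → ℕ → ℝ) :
    ∑ x ∈ Finset.Ico a M, ∑ y ∈ Finset.Ico a x, g x y
      = ∑ y ∈ Finset.Ico a M, ∑ x ∈ Finset.Ico (y + 1) M, g x y :=
  Finset.sum_comm' fun x y => by simp only [Finset.mem_Ico]; omega

lemma sum_Icc_triangle_comm (N : ℕ) (g : ℕ → ℕ → ℝ) :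
    ∑ x ∈ Finset.Icc 1 N, ∑ y ∈ Finset.Ico 1 x, g x y
      = ∑ y ∈ Finset.Icc 1 N, ∑ x ∈ Finset.Ico (y + 1) (N + 1), g x y := by
  rw [← Finset.Ico_add_one_right_eq_Icc, sum_Ico_triangle_comm]

lemma eulerSum2_partial (s u N : ℕ) (e : ℝ) :
    ∑ n₁ ∈ Finset.Icc 1 N, ∑ n₂ ∈ Finset.Ico 1 n₁,
      (-1 : ℝ) ^ n₁ * e ^ n₂ / ((n₁ : ℝ) ^ s * (n₂ : ℝ) ^ u)
      = ∑ n ∈ Finset.Icc 1 N, e ^ n / (n : ℝ) ^ u * altTail s N n := by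
  rw [sum_Icc_triangle_comm]
  refine Finset.sum_congr rfl fun n _ => ?_
  rw [altTail, Finset.mul_sum]
  exact Finset.sum_congr rfl fun k _ => by rw [div_mul_div_comm]; ring

lemma eulerSum3_partial (u N : ℕ) (e : ℝ) :
    ∑ n₁ ∈ Finset.Icc 1 N, ∑ n₂ ∈ Finset.Ico 1 n₁, ∑ n₃ ∈ Finset.Ico 1 n₂,
      (-1 : ℝ) ^ n₁ * 1 ^ n₂ * e ^ n₃ / ((n₁ : ℝ) ^ 1 * (n₂ : ℝ) ^ 1 * (n₃ : ℝ) ^ u)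
      = ∑ n ∈ Finset.Icc 1 N, e ^ n / (n : ℝ) ^ u * altDoubleTail N n := by
  rw [sum_Icc_triangle_comm]
  simp_rw [Finset.sum_comm (s := Finset.Ico (_ + 1) (N + 1)) (t := Finset.Ico 1 _)]
  rw [sum_Icc_triangle_comm]
  refine Finset.sum_congr rfl fun n _ => ?_
  rw [altDoubleTail, Finset.mul_sum]
  refine Finset.sum_congr rfl fun l _ => ?_
  rw [altTail, Finset.mul_sum, Finset.mul_sum]
  refine Finset.sum_congr rfl fun k _ => ?_
  rw [div_mul_div_comm, div_mul_div_comm]; ring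

lemma tendsto_eulerSum1 {w : ℕ} (hw : 2 ≤ w) :
    Tendsto (fun N : ℕ => ∑ n ∈ Finset.Icc 1 N, (-1 : ℝ) ^ n / (n : ℝ) ^ w) atTop
      (𝓝 (eulerSum1 w (-1))) := by
  obtain ⟨t, ht⟩ := exists_tendsto_sum_mul_of_bounded (E := fun _ _ => 1) (C := 1) (e := -1) hw
    (by simp) (fun _ => ⟨1, tendsto_const_nhds⟩) (by simp)
  simp only [mul_one] at ht
  rwa [eulerSum1, ht.limUnder_eq]

lemma tendsto_eulerSum2 {s u : ℕ} {e : ℝ} (hs : s = 1 ∨ s = 2) (hu : 2 ≤ u) (he : |e| = 1) :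
    Tendsto (fun N : ℕ => ∑ n ∈ Finset.Icc 1 N, e ^ n / (n : ℝ) ^ u * altTail s N n) atTop
      (𝓝 (eulerSum2 s u (-1) e)) := by
  have h : ∃ t : ℝ, Tendsto
      (fun N : ℕ => ∑ n ∈ Finset.Icc 1 N, e ^ n / (n : ℝ) ^ u * altTail s N n) atTop (𝓝 t) := by
    rcases hs with rfl | rfl
    · obtain ⟨r, hr⟩ := exists_tendsto_altHarm
      refine exists_tendsto_sum_mul_of_bounded (C := 1) hu he
        (fun n => ⟨_, tendsto_altTail_one hr n⟩) fun N n hn => (abs_altTail_one_le hn).trans ?_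
      rw [div_le_one (by positivity)]
      push_cast
      linarith [n.cast_nonneg (α := ℝ)]
    · obtain ⟨C, hC⟩ := exists_abs_altTail_two_le
      exact exists_tendsto_sum_mul_of_bounded hu he exists_tendsto_altTail_two fun N n _ => hC N n
  obtain ⟨t, ht⟩ := h
  simp only [eulerSum2, eulerSum2_partial]
  rwa [ht.limUnder_eq]

lemma tendsto_eulerSum3_one_one {u : ℕ} {e : ℝ} (hu : 2 ≤ u) (he : |e| = 1) :
    Tendsto (fun N : ℕ => ∑ n ∈ Finset.Icc 1 N, e ^ n / (n : ℝ) ^ u * altDoubleTail N n) atTop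
      (𝓝 (eulerSum3 1 1 u (-1) 1 e)) := by
  obtain ⟨t, ht⟩ := exists_tendsto_sum_mul_of_bounded hu he exists_tendsto_altDoubleTail
    fun N n _ => abs_altDoubleTail_le N n
  simp only [eulerSum3, eulerSum3_partial]
  rwa [ht.limUnder_eq]

lemma tendsto_eulerSum3_of_two_le {a b c : ℕ} (ha : 2 ≤ a) (hb : 1 ≤ b) (hc : 1 ≤ c) :
    Tendsto (fun N : ℕ => ∑ n₁ ∈ Finset.Icc 1 N, ∑ n₂ ∈ Finset.Ico 1 n₁, ∑ n₃ ∈ Finset.Ico 1 n₂,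
      (-1 : ℝ) ^ n₁ * (-1) ^ n₂ * 1 ^ n₃ / ((n₁ : ℝ) ^ a * (n₂ : ℝ) ^ b * (n₃ : ℝ) ^ c)) atTop
      (𝓝 (eulerSum3 a b c (-1) (-1) 1)) := by
  have h := tendsto_sum_Icc_of_dominated summable_harm_sq_div
    (f := fun _ n₁ => ∑ n₂ ∈ Finset.Ico 1 n₁, ∑ n₃ ∈ Finset.Ico 1 n₂,
      (-1 : ℝ) ^ n₁ * (-1) ^ n₂ * 1 ^ n₃ / ((n₁ : ℝ) ^ a * (n₂ : ℝ) ^ b * (n₃ : ℝ) ^ c))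
    (fun n _ => tendsto_const_nhds) fun _ n₁ hn₁ _ => ?_
  · rwa [eulerSum3, h.limUnder_eq]
  have hn : (1 : ℝ) ≤ n₁ := by exact_mod_cast hn₁
  calc _ ≤ ∑ n₂ ∈ Finset.Ico 1 n₁, ∑ n₃ ∈ Finset.Ico 1 n₁,
        1 / (n₁ : ℝ) ^ 2 * (1 / n₂) * (1 / n₃) := by
        refine (Finset.abs_sum_le_sum_abs _ _).trans (Finset.sum_le_sum fun n₂ h₂ => ?_)
        have h₂' := Finset.mem_Ico.1 h₂
        refine (Finset.abs_sum_le_sum_abs _ _).trans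
          ((Finset.sum_le_sum fun n₃ h₃ => ?_).trans
            (Finset.sum_le_sum_of_subset_of_nonneg
              (Finset.Ico_subset_Ico_right h₂'.2.le) fun _ _ _ => by positivity))
        have h₃' := Finset.mem_Ico.1 h₃
        have hn₂ : (1 : ℝ) ≤ n₂ := by exact_mod_cast h₂'.1
        have hn₃ : (1 : ℝ) ≤ n₃ := by exact_mod_cast h₃'.1
        rw [abs_div, abs_mul, abs_mul, abs_pow, abs_pow, abs_pow, abs_neg, abs_one, one_pow,
          one_pow, one_pow, one_mul, one_mul, abs_of_nonneg (by positivity), one_div_mul_one_div,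
          one_div_mul_one_div]
        have := pow_le_pow_right₀ hn ha
        have := le_self_pow₀ hn₂ (show b ≠ 0 by omega)
        have := le_self_pow₀ hn₃ (show c ≠ 0 by omega)
        gcongr
    _ = harm n₁ ^ 2 / (n₁ : ℝ) ^ 2 := by
        simp_rw [← Finset.mul_sum, ← Finset.sum_mul, ← Finset.mul_sum]
        rw [harm]; ring
    _ ≤ _ := by
        have := harm_mono (Nat.le_succ n₁)
        have := harm_nonneg n₁
        gcongr

lemma sum_one_div_pow_mul_pow {y z : ℝ} (hy : y ≠ 0) (hz : z ≠ 0) (hyz : y - z ≠ 0) (t : ℕ) :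
    ∑ b ∈ Finset.Icc 1 t, 1 / (y ^ b * z ^ (t + 1 - b)) = (1 / z ^ t - 1 / y ^ t) / (y - z) := by
  induction t with
  | zero => simp
  | succ t ih =>
    have e : ∑ b ∈ Finset.Icc 1 t, 1 / (y ^ b * z ^ (t + 1 + 1 - b))
        = (∑ b ∈ Finset.Icc 1 t, 1 / (y ^ b * z ^ (t + 1 - b))) / z := by
      rw [Finset.sum_div]
      refine Finset.sum_congr rfl fun b hb => ?_
      have hb' := Finset.mem_Icc.1 hb
      rw [show t + 1 + 1 - b = t + 1 - b + 1 by omega, pow_succ, div_div, mul_assoc]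
    rw [Finset.sum_Icc_succ_top (by omega), e, ih, show t + 1 + 1 - (t + 1) = 1 by omega]
    field_simp
    ring

/-- Partial fractions for the complete homogeneous sum of weight `m + 3`. -/
lemma sum_triple_partial_fractions {x y z : ℝ} (hx : x ≠ 0) (hy : y ≠ 0) (hz : z ≠ 0)
    (hxy : x - y ≠ 0) (hxz : x - z ≠ 0) (hyz : y - z ≠ 0) (m : ℕ) :
    ∑ a ∈ Finset.Icc 2 (m + 1), ∑ b ∈ Finset.Icc 1 (m + 3 - a - 1),
        1 / (x ^ a * y ^ b * z ^ (m + 3 - a - b))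
      = 1 / z ^ m * (1 / (x * (x - z) * (y - z))) - 1 / y ^ m * (1 / (x * (x - y) * (y - z)))
        + 1 / x ^ m * (1 / (x * (x - y) * (x - z))) := by
  have inner : ∀ a ∈ Finset.Icc 1 m, ∑ b ∈ Finset.Icc 1 (m + 3 - (a + 1) - 1),
        1 / (x ^ (a + 1) * y ^ b * z ^ (m + 3 - (a + 1) - b))
      = (1 / (x ^ a * z ^ (m + 1 - a)) - 1 / (x ^ a * y ^ (m + 1 - a))) / (x * (y - z)) := by
    intro a ha
    have ha' := Finset.mem_Icc.1 ha
    have h := sum_one_div_pow_mul_pow hy hz hyz (m + 1 - a)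
    rw [show m + 3 - (a + 1) - 1 = m + 1 - a by omega]
    calc _ = 1 / x ^ (a + 1) *
          ∑ b ∈ Finset.Icc 1 (m + 1 - a), 1 / (y ^ b * z ^ (m + 1 - a + 1 - b)) := by
          rw [Finset.mul_sum]
          refine Finset.sum_congr rfl fun b hb => ?_
          rw [show m + 3 - (a + 1) - b = m + 1 - a + 1 - b by omega, one_div_mul_one_div, mul_assoc]
      _ = _ := by rw [h]; field_simp; ring
  have shift : ∀ f : ℕ → ℝ, ∑ a ∈ Finset.Icc 2 (m + 1), f a = ∑ a ∈ Finset.Icc 1 m, f (a + 1) := by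
    intro f
    rw [← Finset.Ico_add_one_right_eq_Icc, ← Finset.Ico_add_one_right_eq_Icc,
      Finset.sum_Ico_add' f 1 (m + 1) 1]
  rw [shift, Finset.sum_congr rfl inner, ← Finset.sum_div, Finset.sum_sub_distrib,
    sum_one_div_pow_mul_pow hx hz hxz, sum_one_div_pow_mul_pow hx hy hxy]
  field_simp
  ring

lemma sum_Ico_succ_shift (F : ℕ → ℝ) {z M : ℕ} (h : z ≤ M) :
    ∑ x ∈ Finset.Ico (z + 1) M, F x = ∑ k ∈ Finset.Ico 1 (M - z), F (k + z) := by
  rw [Finset.sum_Ico_add' F, Nat.sub_add_cancel h, add_comm 1 z]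

lemma sum_Ico_succ_reflect (F : ℕ → ℝ) (z x : ℕ) :
    ∑ y ∈ Finset.Ico (z + 1) x, F (x - y) = ∑ p ∈ Finset.Ico 1 (x - z), F p := by
  rw [Finset.sum_Ico_reflect F (z + 1) (Nat.le_succ x)]
  congr 1
  ext; simp only [Finset.mem_Ico]; omega

/-- Contribution of the poles at the smallest index. -/
lemma sum_smallest_pole (N m : ℕ) :
    ∑ x ∈ Finset.Icc 1 N, ∑ y ∈ Finset.Ico 1 x, ∑ z ∈ Finset.Ico 1 y,
      (-1 : ℝ) ^ x * (-1) ^ y * (1 / (z : ℝ) ^ m * (1 / ((x : ℝ) * (x - z) * (y - z))))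
    = ∑ n ∈ Finset.Icc 1 N, 1 / (n : ℝ) ^ (m + 1) *
        ∑ k ∈ Finset.Ico 1 (N + 1 - n), (1 / (k : ℝ) - 1 / (k + n)) * (-1) ^ k * altHarm k := by
  simp_rw [sum_Ico_triangle_comm 1 _ fun y z => (_ : ℝ)]
  rw [sum_Icc_triangle_comm]
  refine Finset.sum_congr rfl fun n hn => ?_
  have hn' := Finset.mem_Icc.1 hn
  rw [sum_Ico_succ_shift _ (by omega), Finset.mul_sum]
  refine Finset.sum_congr rfl fun k hk => ?_
  have hk' := Finset.mem_Ico.1 hk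
  rw [sum_Ico_succ_shift _ (by omega), Nat.add_sub_cancel, altHarm, Finset.mul_sum, Finset.mul_sum]
  refine Finset.sum_congr rfl fun l hl => ?_
  have hl' := Finset.mem_Ico.1 hl
  have h1 : (n : ℝ) ≠ 0 := by norm_cast; omega
  have h2 : (k : ℝ) ≠ 0 := by norm_cast; omega
  have h3 : (l : ℝ) ≠ 0 := by norm_cast; omega
  have h4 : (k : ℝ) + n ≠ 0 := by positivity
  push_cast
  rw [add_sub_cancel_right, add_sub_cancel_right, pow_add, pow_add, pow_succ]
  field_simp
  linear_combination (n : ℝ) * neg_one_pow_mul_self n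

/-- Contribution of the poles at the middle index. -/
lemma sum_middle_pole (N m : ℕ) :
    ∑ x ∈ Finset.Icc 1 N, ∑ y ∈ Finset.Ico 1 x, ∑ z ∈ Finset.Ico 1 y,
      (-1 : ℝ) ^ x * (-1) ^ y * (1 / (y : ℝ) ^ m * (1 / ((x : ℝ) * (x - y) * (y - z))))
    = ∑ n ∈ Finset.Icc 1 N, 1 / (n : ℝ) ^ (m + 1) *
        ∑ k ∈ Finset.Ico 1 (N + 1 - n), (1 / (k : ℝ) - 1 / (k + n)) * (-1) ^ k * harm n := by
  rw [sum_Icc_triangle_comm]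
  refine Finset.sum_congr rfl fun n hn => ?_
  have hn' := Finset.mem_Icc.1 hn
  rw [sum_Ico_succ_shift _ (by omega), Finset.mul_sum]
  refine Finset.sum_congr rfl fun k hk => ?_
  have hk' := Finset.mem_Ico.1 hk
  have hr := sum_Ico_succ_reflect (fun p => 1 / (p : ℝ)) 0 n
  rw [zero_add, Nat.sub_zero] at hr
  rw [harm, ← hr, Finset.mul_sum, Finset.mul_sum]
  refine Finset.sum_congr rfl fun z hz => ?_
  have hz' := Finset.mem_Ico.1 hz
  have h1 : (n : ℝ) ≠ 0 := by norm_cast; omega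
  have h2 : (k : ℝ) ≠ 0 := by norm_cast; omega
  have h3 : ((n - z : ℕ) : ℝ) ≠ 0 := by norm_cast; omega
  have h4 : (k : ℝ) + n ≠ 0 := by positivity
  rw [← Nat.cast_sub hz'.2.le]
  push_cast [-Nat.cast_sub]
  rw [add_sub_cancel_right, pow_add, pow_succ]
  field_simp
  linear_combination (n : ℝ) * neg_one_pow_mul_self n

/-- Contribution of the poles at the largest index. -/
lemma sum_largest_pole (N m : ℕ) :
    ∑ x ∈ Finset.Icc 1 N, ∑ y ∈ Finset.Ico 1 x, ∑ z ∈ Finset.Ico 1 y,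
      (-1 : ℝ) ^ x * (-1) ^ y * (1 / (x : ℝ) ^ m * (1 / ((x : ℝ) * (x - y) * (x - z))))
    = ∑ n ∈ Finset.Icc 1 N, 1 / (n : ℝ) ^ (m + 1) * altHarmSum n := by
  refine Finset.sum_congr rfl fun n hn => ?_
  rw [sum_Ico_triangle_comm]
  have hr := sum_Ico_succ_reflect (fun q => altHarm q / q) 0 n
  rw [zero_add, Nat.sub_zero] at hr
  rw [altHarmSum, ← hr, Finset.mul_sum]
  refine Finset.sum_congr rfl fun z hz => ?_
  have hz' := Finset.mem_Ico.1 hz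
  rw [altHarm, ← sum_Ico_succ_reflect, Finset.sum_div, Finset.mul_sum]
  refine Finset.sum_congr rfl fun y hy => ?_
  have hy' := Finset.mem_Ico.1 hy
  have hs : (-1 : ℝ) ^ n = (-1) ^ (n - y) * (-1) ^ y := by
    rw [← pow_add, Nat.sub_add_cancel hy'.2.le]
  rw [← Nat.cast_sub hy'.2.le, ← Nat.cast_sub hz'.2.le, hs]
  have h1 : (n : ℝ) ≠ 0 := by norm_cast; omega
  have h2 : ((n - y : ℕ) : ℝ) ≠ 0 := by norm_cast; omega
  have h3 : ((n - z : ℕ) : ℝ) ≠ 0 := by norm_cast; omega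
  rw [pow_succ (n : ℝ)]
  field_simp
  rw [← pow_mul, mul_comm y 2, pow_mul]
  simp

/-- The truncated sum over all triples in terms of `tripleKernel`. -/
lemma sum_triple_partial_s16 (m N : ℕ) :
    ∑ a ∈ Finset.Icc 2 (m + 1), ∑ b ∈ Finset.Icc 1 (m + 3 - a - 1),
      ∑ n₁ ∈ Finset.Icc 1 N, ∑ n₂ ∈ Finset.Ico 1 n₁, ∑ n₃ ∈ Finset.Ico 1 n₂,
        (-1 : ℝ) ^ n₁ * (-1) ^ n₂ * 1 ^ n₃ /
          ((n₁ : ℝ) ^ a * (n₂ : ℝ) ^ b * (n₃ : ℝ) ^ (m + 3 - a - b))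
      = ∑ n ∈ Finset.Icc 1 N, 1 / (n : ℝ) ^ (m + 1) * tripleKernel N n := by
  calc _ = ∑ x ∈ Finset.Icc 1 N, ∑ y ∈ Finset.Ico 1 x, ∑ z ∈ Finset.Ico 1 y,
        (-1 : ℝ) ^ x * (-1) ^ y *
          ∑ a ∈ Finset.Icc 2 (m + 1), ∑ b ∈ Finset.Icc 1 (m + 3 - a - 1),
            1 / ((x : ℝ) ^ a * (y : ℝ) ^ b * (z : ℝ) ^ (m + 3 - a - b)) := by
        simp_rw [Finset.mul_sum]
        simp_rw [Finset.sum_comm (s := Finset.Icc 1 (m + 3 - _ - 1)) (t := Finset.Icc 1 N),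
          Finset.sum_comm (s := Finset.Icc 2 (m + 1)) (t := Finset.Icc 1 N)]
        refine Finset.sum_congr rfl fun x _ => ?_
        simp_rw [Finset.sum_comm (s := Finset.Icc 1 (m + 3 - _ - 1)) (t := Finset.Ico 1 x),
          Finset.sum_comm (s := Finset.Icc 2 (m + 1)) (t := Finset.Ico 1 x)]
        refine Finset.sum_congr rfl fun y _ => ?_
        simp_rw [Finset.sum_comm (s := Finset.Icc 1 (m + 3 - _ - 1)) (t := Finset.Ico 1 y),
          Finset.sum_comm (s := Finset.Icc 2 (m + 1)) (t := Finset.Ico 1 y)]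
        refine Finset.sum_congr rfl fun z _ => Finset.sum_congr rfl fun a _ =>
          Finset.sum_congr rfl fun b _ => ?_
        rw [one_pow, mul_one, mul_one_div]
    _ = ∑ x ∈ Finset.Icc 1 N, ∑ y ∈ Finset.Ico 1 x, ∑ z ∈ Finset.Ico 1 y,
        ((-1 : ℝ) ^ x * (-1) ^ y * (1 / (z : ℝ) ^ m * (1 / ((x : ℝ) * (x - z) * (y - z))))
        - (-1 : ℝ) ^ x * (-1) ^ y * (1 / (y : ℝ) ^ m * (1 / ((x : ℝ) * (x - y) * (y - z))))
        + (-1 : ℝ) ^ x * (-1) ^ y * (1 / (x : ℝ) ^ m * (1 / ((x : ℝ) * (x - y) * (x - z))))) := by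
        refine Finset.sum_congr rfl fun x hx => Finset.sum_congr rfl fun y hy =>
          Finset.sum_congr rfl fun z hz => ?_
        have hx' := Finset.mem_Icc.1 hx
        have hy' := Finset.mem_Ico.1 hy
        have hz' := Finset.mem_Ico.1 hz
        have h1 : (y : ℝ) < x := by exact_mod_cast hy'.2
        have h2 : (z : ℝ) < y := by exact_mod_cast hz'.2
        rw [sum_triple_partial_fractions (by norm_cast; omega) (by norm_cast; omega)
          (by norm_cast; omega) (by linarith) (by linarith) (by linarith)]
        ring
    _ = _ := by
        simp_rw [Finset.sum_add_distrib, Finset.sum_sub_distrib]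
        rw [sum_smallest_pole, sum_middle_pole, sum_largest_pole, ← Finset.sum_sub_distrib,
          ← Finset.sum_add_distrib]
        refine Finset.sum_congr rfl fun n _ => ?_
        rw [tripleKernel, mul_add, ← mul_sub, ← Finset.sum_sub_distrib]
        simp_rw [← mul_sub]

/-- The coefficient of `1 / n ^ (w - 2)` in the truncation at `N` of the right-hand side. -/
noncomputable def tailKernel (N n : ℕ) : ℝ :=
  (1 - (-1 : ℝ) ^ n) * (altDoubleTail N n + altTail 2 N n + altTail 1 N n / n)
    + (-1 : ℝ) ^ n / (n : ℝ) ^ 2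

lemma tendsto_tailKernel {c r : ℝ}
    (hc : Tendsto (fun K : ℕ => ∑ k ∈ Finset.Ico 1 K, (-1 : ℝ) ^ k * harm (k + 1) / k) atTop (𝓝 c))
    (hr : Tendsto altHarm atTop (𝓝 r)) {n : ℕ} (hn : 1 ≤ n) :
    Tendsto (fun N => tailKernel N n) atTop
      (𝓝 ((1 - (-1 : ℝ) ^ n) * (c - r * harm n + altHarmSum n) + 1 / (n : ℝ) ^ 2)) := by
  have h := (((tendsto_altDoubleTail_add_altTail_two hc hr n).add
    ((tendsto_altTail_one hr n).div_const (n : ℝ))).const_mul (1 - (-1 : ℝ) ^ n)).add_const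
      ((-1 : ℝ) ^ n / (n : ℝ) ^ 2)
  have e : (1 - (-1 : ℝ) ^ n) * (c - r * harm (n + 1) + altHarmSum (n + 1)
        + (r - altHarm (n + 1)) / n) + (-1 : ℝ) ^ n / (n : ℝ) ^ 2
      = (1 - (-1 : ℝ) ^ n) * (c - r * harm n + altHarmSum n) + 1 / (n : ℝ) ^ 2 := by
    rw [harm_succ hn, altHarm_succ hn, altHarmSum_succ hn]
    linear_combination (1 / (n : ℝ) ^ 2) * neg_one_pow_mul_self n
  rwa [e] at h

lemma exists_abs_tailKernel_le : ∃ C : ℝ, ∀ N n, 1 ≤ n → n ≤ N → |tailKernel N n| ≤ C := by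
  obtain ⟨C, hC⟩ := exists_abs_altTail_two_le
  refine ⟨2 * (1 + C + 1) + 1, fun N n hn hN => ?_⟩
  have hn' : (1 : ℝ) ≤ n := by exact_mod_cast hn
  have h1 : |1 - (-1 : ℝ) ^ n| ≤ 2 := by
    refine (abs_sub _ _).trans ?_
    rw [abs_pow, abs_neg, abs_one, one_pow]; norm_num
  have h2 : |altTail 1 N n / n| ≤ 1 := by
    rw [abs_div, Nat.abs_cast]
    refine div_le_one_of_le₀ ((abs_altTail_one_le hN).trans (le_trans ?_ hn')) (by positivity)
    rw [div_le_one (by positivity)]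
    push_cast; linarith
  have h3 : |(-1 : ℝ) ^ n / (n : ℝ) ^ 2| ≤ 1 := by
    rw [abs_div, abs_pow, abs_neg, abs_one, one_pow, abs_of_nonneg (by positivity)]
    exact div_le_one_of_le₀ (one_le_pow₀ hn') (by positivity)
  refine (abs_add_le _ _).trans (add_le_add ?_ h3)
  rw [abs_mul]
  refine mul_le_mul h1 ?_ (abs_nonneg _) (by norm_num)
  exact (abs_add_le _ _).trans
    (add_le_add ((abs_add_le _ _).trans (add_le_add (abs_altDoubleTail_le N n) (hC N n))) h2)

lemma sum_tailKernel (u N : ℕ) :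
    ∑ n ∈ Finset.Icc 1 N, 1 / (n : ℝ) ^ u * tailKernel N n
      = ∑ n ∈ Finset.Icc 1 N, 1 ^ n / (n : ℝ) ^ u * altDoubleTail N n
        - ∑ n ∈ Finset.Icc 1 N, (-1 : ℝ) ^ n / (n : ℝ) ^ u * altDoubleTail N n
        + ∑ n ∈ Finset.Icc 1 N, 1 ^ n / (n : ℝ) ^ (u + 1) * altTail 1 N n
        - ∑ n ∈ Finset.Icc 1 N, (-1 : ℝ) ^ n / (n : ℝ) ^ (u + 1) * altTail 1 N n
        + ∑ n ∈ Finset.Icc 1 N, 1 ^ n / (n : ℝ) ^ u * altTail 2 N n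
        - ∑ n ∈ Finset.Icc 1 N, (-1 : ℝ) ^ n / (n : ℝ) ^ u * altTail 2 N n
        + ∑ n ∈ Finset.Icc 1 N, (-1 : ℝ) ^ n / (n : ℝ) ^ (u + 2) := by
  simp_rw [← Finset.sum_sub_distrib, ← Finset.sum_add_distrib, ← Finset.sum_sub_distrib,
    ← Finset.sum_add_distrib, ← Finset.sum_sub_distrib, ← Finset.sum_add_distrib]
  refine Finset.sum_congr rfl fun n hn => ?_
  have h1 : (n : ℝ) ≠ 0 := by have := Finset.mem_Icc.1 hn; norm_cast; omega
  rw [tailKernel, one_pow, pow_add, pow_succ]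
  field_simp
  ring

/-- For `w ≥ 4`, with `u = w − 2`, `v = w − 1`:
`∑_{a+b+c=w, a≥2} ζ(ā,b̄,c)
  = ζ(1̄,1,u) − ζ(1̄,1,ū) + ζ(1̄,v) − ζ(1̄,v̄) + ζ(2̄,u) − ζ(2̄,ū) + ζ(w̄)`. -/
theorem sum_triple_barbar_unbar (w : ℕ) (hw : 4 ≤ w) :
    ∑ a ∈ Finset.Icc 2 (w - 2), ∑ b ∈ Finset.Icc 1 (w - a - 1),
        eulerSum3 a b (w - a - b) (-1) (-1) 1
      = eulerSum3 1 1 (w - 2) (-1) 1 1 - eulerSum3 1 1 (w - 2) (-1) 1 (-1)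
        + eulerSum2 1 (w - 1) (-1) 1 - eulerSum2 1 (w - 1) (-1) (-1)
        + eulerSum2 2 (w - 2) (-1) 1 - eulerSum2 2 (w - 2) (-1) (-1)
        + eulerSum1 w (-1) := by
  obtain ⟨m, rfl⟩ : ∃ m, w = m + 3 := ⟨w - 3, by omega⟩
  obtain ⟨r, hr⟩ := exists_tendsto_altHarm
  obtain ⟨c, hc, hc'⟩ := exists_tendsto_sum_altHarm_sum_harm
  rw [show m + 3 - 2 = m + 1 by omega, show m + 3 - 1 = m + 1 + 1 by omega,
    show m + 3 = m + 1 + 2 by omega]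
  have hu : 2 ≤ m + 1 := by omega
  have hpos : |(1 : ℝ)| = 1 := abs_one
  have hneg : |(-1 : ℝ)| = 1 := by simp
  have lhs : Tendsto (fun N : ℕ => ∑ n ∈ Finset.Icc 1 N, 1 / (n : ℝ) ^ (m + 1) * tripleKernel N n)
      atTop (𝓝 (∑ a ∈ Finset.Icc 2 (m + 1), ∑ b ∈ Finset.Icc 1 (m + 3 - a - 1),
        eulerSum3 a b (m + 3 - a - b) (-1) (-1) 1)) := by
    simp_rw [← sum_triple_partial_s16]
    refine tendsto_finsetSum _ fun a ha => tendsto_finsetSum _ fun b hb => ?_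
    have ha' := Finset.mem_Icc.1 ha
    have hb' := Finset.mem_Icc.1 hb
    exact tendsto_eulerSum3_of_two_le ha'.1 hb'.1 (by omega)
  have rhs := ((((((tendsto_eulerSum3_one_one hu hpos).sub (tendsto_eulerSum3_one_one hu hneg)).add
    (tendsto_eulerSum2 (s := 1) (Or.inl rfl) (Nat.le_succ_of_le hu) hpos)).sub
    (tendsto_eulerSum2 (s := 1) (Or.inl rfl) (Nat.le_succ_of_le hu) hneg)).add
    (tendsto_eulerSum2 (s := 2) (Or.inr rfl) hu hpos)).sub
    (tendsto_eulerSum2 (s := 2) (Or.inr rfl) hu hneg)).add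
    (tendsto_eulerSum1 (w := m + 1 + 2) (by omega))
  simp_rw [← sum_tailKernel] at rhs
  obtain ⟨C, hC⟩ := exists_abs_tailKernel_le
  have lhs' := tendsto_sum_Icc_of_dominated (summable_harm_sq_div.mul_left 3)
    (f := fun N n => 1 / (n : ℝ) ^ (m + 1) * tripleKernel N n)
    (fun n hn => (tendsto_tripleKernel hc hr hn).const_mul _) fun N n hn _ => by
      have hn' : (1 : ℝ) ≤ n := by exact_mod_cast hn
      rw [abs_mul, abs_of_nonneg (by positivity), mul_comm, mul_one_div, ← mul_div_assoc]
      have := abs_tripleKernel_le N hn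
      have := pow_le_pow_right₀ hn' hu
      gcongr
  have rhs' := tendsto_sum_Icc_of_dominated (summable_const_div_pow C hu)
    (f := fun N n => 1 / (n : ℝ) ^ (m + 1) * tailKernel N n)
    (fun n hn => (tendsto_tailKernel hc' hr hn).const_mul _) fun N n hn hN => by
      rw [abs_mul, abs_of_nonneg (by positivity), mul_comm]
      exact mul_le_mul_of_nonneg_right (hC N n hn hN) (by positivity)
  rw [tendsto_nhds_unique rhs rhs', ← tendsto_nhds_unique lhs lhs']
end
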